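/- arXiv:2510.25482 — 2 statements merged into one kernel-verified Lean document; each statement's English description precedes it below -/
import Mathlib

section
/- A complex matrix pencil is strictly equivalent to some skew-symmetric matrix pencil if and only if its Kronecker canonical form satisfies: (1) for every k and every μ ∈ ℂ, the number of blocks E_k(μ) is even; (2) for every k, the number of blocks E_k(∞) is even; (3) for every k, the number of blocks L_k equals the number of blocks L_kᵀ. -/
/-!
Basic framework: a complex `m × n` matrix pencil `A - λ B` is formalized as the
pair `(A, B)` of matrices.  We define strict equivalence, congruence,
skew-symmetry, orbits, direct sums, and the cover relations for the orbit
closure hierarchies (in the Euclidean topology).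
-/

open Matrix

noncomputable section

/-- An `m × n` complex matrix pencil `A - λ B`, formalized as the pair `(A, B)`. -/
abbrev Pencil (m n : ℕ) : Type :=
  Matrix (Fin m) (Fin n) ℂ × Matrix (Fin m) (Fin n) ℂ

namespace Pencil

/-- Strict equivalence of matrix pencils: `Q⁻¹ * A * R = C` and `Q⁻¹ * B * R = D`
for some invertible `Q`, `R`. -/
def StrictEquiv {m n : ℕ} (P Q : Pencil m n) : Prop :=
  ∃ (S : Matrix (Fin m) (Fin m) ℂ) (R : Matrix (Fin n) (Fin n) ℂ),
    IsUnit S ∧ IsUnit R ∧ S⁻¹ * P.1 * R = Q.1 ∧ S⁻¹ * P.2 * R = Q.2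

/-- The strict-equivalence orbit of a pencil. -/
def orbE {m n : ℕ} (P : Pencil m n) : Set (Pencil m n) :=
  {Q | StrictEquiv P Q}

/-- A pencil `A - λ B` is skew-symmetric if `Aᵀ = -A` and `Bᵀ = -B`. -/
def IsSkew {n : ℕ} (P : Pencil n n) : Prop :=
  P.1ᵀ = -P.1 ∧ P.2ᵀ = -P.2

/-- Congruence of (square) matrix pencils: `Sᵀ * A * S = C` and `Sᵀ * B * S = D`
for some invertible `S`. -/
def Congruent {n : ℕ} (P Q : Pencil n n) : Prop :=
  ∃ S : Matrix (Fin n) (Fin n) ℂ,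
    IsUnit S ∧ Sᵀ * P.1 * S = Q.1 ∧ Sᵀ * P.2 * S = Q.2

/-- The congruence orbit of a pencil. -/
def orbC {n : ℕ} (P : Pencil n n) : Set (Pencil n n) :=
  {Q | Congruent P Q}

/-- Direct (block-diagonal) sum of two pencils. -/
def dsum {m n p q : ℕ} (P : Pencil m n) (Q : Pencil p q) : Pencil (m + p) (n + q) :=
  ((fromBlocks P.1 0 0 Q.1).submatrix finSumFinEquiv.symm finSumFinEquiv.symm,
   (fromBlocks P.2 0 0 Q.2).submatrix finSumFinEquiv.symm finSumFinEquiv.symm)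

/-- Transport a pencil along equalities of its dimensions. -/
def cast {m n m' n' : ℕ} (hm : m = m') (hn : n = n') (P : Pencil m n) : Pencil m' n' :=
  (P.1.submatrix (finCongr hm.symm) (finCongr hn.symm),
   P.2.submatrix (finCongr hm.symm) (finCongr hn.symm))

/-- `orbE P1` covers `orbE P2` in the closure hierarchy of strict-equivalence
orbits: `P1` is not strictly equivalent to `P2`, `orbE P2 ⊆ closure (orbE P1)`,
and there is no intermediate orbit strictly between them. -/
def CoversE {m n : ℕ} (P1 P2 : Pencil m n) : Prop :=
  ¬ StrictEquiv P1 P2 ∧ orbE P2 ⊆ closure (orbE P1) ∧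
    ¬ ∃ P : Pencil m n, ¬ StrictEquiv P P1 ∧ ¬ StrictEquiv P P2 ∧
        orbE P ⊆ closure (orbE P1) ∧ orbE P2 ⊆ closure (orbE P)

/-- `orbC P1` covers `orbC P2` in the closure hierarchy of congruence orbits of
skew-symmetric pencils: `P1` is not congruent to `P2`,
`orbC P2 ⊆ closure (orbC P1)`, and there is no congruence orbit of a
skew-symmetric pencil strictly between them. -/
def CoversC {n : ℕ} (P1 P2 : Pencil n n) : Prop :=
  ¬ Congruent P1 P2 ∧ orbC P2 ⊆ closure (orbC P1) ∧
    ¬ ∃ P : Pencil n n, IsSkew P ∧ ¬ Congruent P P1 ∧ ¬ Congruent P P2 ∧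
        orbC P ⊆ closure (orbC P1) ∧ orbC P2 ⊆ closure (orbC P)

end Pencil

/-! Canonical building blocks. -/

/-- The `k × k` Jordan block `J_k(μ)`. -/
def Jmat (k : ℕ) (μ : ℂ) : Matrix (Fin k) (Fin k) ℂ :=
  Matrix.of fun i j => if (j : ℕ) = (i : ℕ) then μ else if (j : ℕ) = (i : ℕ) + 1 then 1 else 0

/-- The `k × (k+1)` matrix `F_k` with ones on the superdiagonal. -/
def Fmat (k : ℕ) : Matrix (Fin k) (Fin (k + 1)) ℂ :=
  Matrix.of fun i j => if (j : ℕ) = (i : ℕ) + 1 then 1 else 0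

/-- The `k × (k+1)` matrix `G_k` with ones on the diagonal. -/
def Gmat (k : ℕ) : Matrix (Fin k) (Fin (k + 1)) ℂ :=
  Matrix.of fun i j => if (j : ℕ) = (i : ℕ) then 1 else 0

/-- The Kronecker block `E_k(μ) = J_k(μ) - λ I_k`. -/
def Eblk (k : ℕ) (μ : ℂ) : Pencil k k := (Jmat k μ, 1)

/-- The Kronecker block `E_k(∞) = I_k - λ J_k(0)`. -/
def EInfblk (k : ℕ) : Pencil k k := (1, Jmat k 0)

/-- The Kronecker block `L_k = F_k - λ G_k`. -/
def Lblk (k : ℕ) : Pencil k (k + 1) := (Fmat k, Gmat k)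

/-- The Kronecker block `L_kᵀ = F_kᵀ - λ G_kᵀ`. -/
def LTblk (k : ℕ) : Pencil (k + 1) k := ((Fmat k)ᵀ, (Gmat k)ᵀ)

/-- The skew-symmetric matrix `[[0, X], [-Xᵀ, 0]]`. -/
def skewPair {p q : ℕ} (X : Matrix (Fin p) (Fin q) ℂ) :
    Matrix (Fin (p + q)) (Fin (p + q)) ℂ :=
  (fromBlocks 0 X (-Xᵀ) 0).submatrix finSumFinEquiv.symm finSumFinEquiv.symm

/-- The skew-symmetric canonical block `H_h(μ)` (size `2h × 2h`). -/
def Hblk (h : ℕ) (μ : ℂ) : Pencil (h + h) (h + h) :=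
  (skewPair (Jmat h μ), skewPair (1 : Matrix (Fin h) (Fin h) ℂ))

/-- The skew-symmetric canonical block `K_k = H_k(∞)` (size `2k × 2k`). -/
def Kblk (k : ℕ) : Pencil (k + k) (k + k) :=
  (skewPair (1 : Matrix (Fin k) (Fin k) ℂ), skewPair (Jmat k 0))

/-- The skew-symmetric canonical block `M_m` (size `(2m+1) × (2m+1)`). -/
def Mblk (m : ℕ) : Pencil (m + (m + 1)) (m + (m + 1)) :=
  (skewPair (Fmat m), skewPair (Gmat m))

/-! Kronecker canonical forms as multisets of block descriptors. -/

/-- Descriptor of a Kronecker canonical block. -/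
inductive KBlock : Type
  | E : ℕ → ℂ → KBlock        -- `E_k(μ)`, `μ ∈ ℂ`
  | Einf : ℕ → KBlock          -- `E_k(∞)`
  | L : ℕ → KBlock             -- `L_k`
  | LT : ℕ → KBlock            -- `L_kᵀ`

namespace KBlock

/-- Number of rows of a block. -/
def rows : KBlock → ℕ
  | E k _ => k
  | Einf k => k
  | L k => k
  | LT k => k + 1

/-- Number of columns of a block. -/
def cols : KBlock → ℕ
  | E k _ => k
  | Einf k => k
  | L k => k + 1
  | LT k => k

/-- The index of a block. -/
def idx : KBlock → ℕ
  | E k _ => k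
  | Einf k => k
  | L k => k
  | LT k => k

/-- A block is valid (may occur in a Kronecker canonical form) if Jordan blocks
have size at least one. -/
def valid : KBlock → Prop
  | E k _ => 1 ≤ k
  | Einf k => 1 ≤ k
  | L _ => True
  | LT _ => True

/-- The pencil corresponding to a block descriptor. -/
def toPencil : (b : KBlock) → Pencil b.rows b.cols
  | E k μ => Eblk k μ
  | Einf k => EInfblk k
  | L k => Lblk k
  | LT k => LTblk k

end KBlock

/-- The block `E_k(μ)` for an eigenvalue `μ ∈ ℂ ∪ {∞}`; `none` encodes `∞`. -/
def Eb : Option ℂ → ℕ → KBlock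
  | some μ, k => KBlock.E k μ
  | none, k => KBlock.Einf k

/-- Total number of rows of a list of blocks. -/
def rowsSum : List KBlock → ℕ
  | [] => 0
  | b :: t => b.rows + rowsSum t

/-- Total number of columns of a list of blocks. -/
def colsSum : List KBlock → ℕ
  | [] => 0
  | b :: t => b.cols + colsSum t

/-- The direct sum of the blocks in a list. -/
def pencilOfList : (l : List KBlock) → Pencil (rowsSum l) (colsSum l)
  | [] => (0, 0)
  | b :: t => Pencil.dsum b.toPencil (pencilOfList t)

/-- `s` is the multiset of blocks of a Kronecker canonical form of `P`, i.e. `P`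
is strictly equivalent to the direct sum of the blocks of `s`. -/
def RepresentsE {m n : ℕ} (P : Pencil m n) (s : Multiset KBlock) : Prop :=
  (∀ b ∈ s, b.valid) ∧
  ∃ (l : List KBlock) (hm : rowsSum l = m) (hn : colsSum l = n),
    (l : Multiset KBlock) = s ∧
    Pencil.StrictEquiv (Pencil.cast hm hn (pencilOfList l)) P

/-- Like `RepresentsE`, but also allowing degenerate (empty) blocks such as
`E_0(μ)` among the summands. -/
def WeakRepresentsE {m n : ℕ} (P : Pencil m n) (s : Multiset KBlock) : Prop :=
  ∃ (l : List KBlock) (hm : rowsSum l = m) (hn : colsSum l = n),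
    (l : Multiset KBlock) = s ∧
    Pencil.StrictEquiv (Pencil.cast hm hn (pencilOfList l)) P

/-! Equivalence of pairs of matrices indexed by arbitrary finite types. -/

section PairEquiv

variable {m n m' n' m'' n'' : Type*}
  [Fintype m] [Fintype n] [Fintype m'] [Fintype n'] [Fintype m''] [Fintype n'']
  [DecidableEq m''] [DecidableEq n''] [DecidableEq m'] [DecidableEq n']
  [DecidableEq m] [DecidableEq n]

/-- Strict equivalence of pairs of matrices whose index types may differ. -/
def PairEquiv (P : Matrix m n ℂ × Matrix m n ℂ) (Q : Matrix m' n' ℂ × Matrix m' n' ℂ) : Prop :=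
  ∃ (S : Matrix m' m ℂ) (S' : Matrix m m' ℂ) (R : Matrix n n' ℂ) (R' : Matrix n' n ℂ),
    S * S' = 1 ∧ S' * S = 1 ∧ R * R' = 1 ∧ R' * R = 1 ∧ S * P.1 * R = Q.1 ∧ S * P.2 * R = Q.2

/-- Block-diagonal sum of two pairs of matrices. -/
def pairSum (P : Matrix m n ℂ × Matrix m n ℂ) (Q : Matrix m' n' ℂ × Matrix m' n' ℂ) :
    Matrix (m ⊕ m') (n ⊕ n') ℂ × Matrix (m ⊕ m') (n ⊕ n') ℂ :=
  (fromBlocks P.1 0 0 Q.1, fromBlocks P.2 0 0 Q.2)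

/-- Entrywise transpose of a pair of matrices. -/
def pairTranspose (P : Matrix m n ℂ × Matrix m n ℂ) : Matrix n m ℂ × Matrix n m ℂ :=
  (P.1ᵀ, P.2ᵀ)

/-- The pair of skew-symmetric matrices with off-diagonal blocks `X` and `-Xᵀ`. -/
def pairSkew (P : Matrix m n ℂ × Matrix m n ℂ) :
    Matrix (m ⊕ n) (m ⊕ n) ℂ × Matrix (m ⊕ n) (m ⊕ n) ℂ :=
  (fromBlocks 0 P.1 (-P.1ᵀ) 0, fromBlocks 0 P.2 (-P.2ᵀ) 0)

theorem PairEquiv.symm {P : Matrix m n ℂ × Matrix m n ℂ} {Q : Matrix m' n' ℂ × Matrix m' n' ℂ}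
    (h : PairEquiv P Q) : PairEquiv Q P := by
  obtain ⟨S, S', R, R', h1, h2, h3, h4, h5, h6⟩ := h
  refine ⟨S', S, R', R, h2, h1, h4, h3, ?_, ?_⟩
  · rw [← h5, ← Matrix.mul_assoc, ← Matrix.mul_assoc, h2, Matrix.one_mul, Matrix.mul_assoc, h3,
      Matrix.mul_one]
  · rw [← h6, ← Matrix.mul_assoc, ← Matrix.mul_assoc, h2, Matrix.one_mul, Matrix.mul_assoc, h3,
      Matrix.mul_one]

theorem PairEquiv.trans {P : Matrix m n ℂ × Matrix m n ℂ} {Q : Matrix m' n' ℂ × Matrix m' n' ℂ}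
    {T : Matrix m'' n'' ℂ × Matrix m'' n'' ℂ} (h : PairEquiv P Q) (k : PairEquiv Q T) :
    PairEquiv P T := by
  obtain ⟨S, S', R, R', h1, h2, h3, h4, h5, h6⟩ := h
  obtain ⟨U, U', W, W', k1, k2, k3, k4, k5, k6⟩ := k
  refine ⟨U * S, S' * U', R * W, W' * R', ?_, ?_, ?_, ?_, ?_, ?_⟩
  · rw [Matrix.mul_assoc, ← Matrix.mul_assoc S, h1, Matrix.one_mul, k1]
  · rw [Matrix.mul_assoc, ← Matrix.mul_assoc U', k2, Matrix.one_mul, h2]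
  · rw [Matrix.mul_assoc, ← Matrix.mul_assoc W, k3, Matrix.one_mul, h3]
  · rw [Matrix.mul_assoc, ← Matrix.mul_assoc R', h4, Matrix.one_mul, k4]
  · rw [← k5, ← h5]; simp only [Matrix.mul_assoc]
  · rw [← k6, ← h6]; simp only [Matrix.mul_assoc]

theorem PairEquiv.of_reindex {P : Matrix m n ℂ × Matrix m n ℂ}
    {Q : Matrix m' n' ℂ × Matrix m' n' ℂ} (e : m' ≃ m) (f : n' ≃ n)
    (h1 : P.1.submatrix e f = Q.1) (h2 : P.2.submatrix e f = Q.2) : PairEquiv P Q := by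
  refine ⟨(1 : Matrix m m ℂ).submatrix e (Equiv.refl m), (1 : Matrix m m ℂ).submatrix (Equiv.refl m) e,
    (1 : Matrix n n ℂ).submatrix (Equiv.refl n) f, (1 : Matrix n n ℂ).submatrix f (Equiv.refl n),
    ?_, ?_, ?_, ?_, ?_, ?_⟩
  · rw [Matrix.submatrix_mul_equiv]; simp
  · rw [Matrix.submatrix_mul_equiv]; simp
  · rw [Matrix.submatrix_mul_equiv]; simp
  · rw [Matrix.submatrix_mul_equiv]; simp
  · rw [← h1]
    have : P.1 = P.1.submatrix (Equiv.refl m) (Equiv.refl n) := by simp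
    conv_lhs => rw [this]
    rw [Matrix.submatrix_mul_equiv, Matrix.submatrix_mul_equiv]; simp
  · rw [← h2]
    have : P.2 = P.2.submatrix (Equiv.refl m) (Equiv.refl n) := by simp
    conv_lhs => rw [this]
    rw [Matrix.submatrix_mul_equiv, Matrix.submatrix_mul_equiv]; simp

theorem PairEquiv.refl (P : Matrix m n ℂ × Matrix m n ℂ) : PairEquiv P P :=
  .of_reindex (Equiv.refl m) (Equiv.refl n) (by simp) (by simp)

theorem PairEquiv.card_rows {P : Matrix m n ℂ × Matrix m n ℂ}
    {Q : Matrix m' n' ℂ × Matrix m' n' ℂ} (h : PairEquiv P Q) :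
    Fintype.card m = Fintype.card m' := by
  obtain ⟨S, S', R, R', h1, h2, h3, h4, h5, h6⟩ := h
  exact Matrix.square_of_invertible S' S h2 h1

theorem PairEquiv.card_cols {P : Matrix m n ℂ × Matrix m n ℂ}
    {Q : Matrix m' n' ℂ × Matrix m' n' ℂ} (h : PairEquiv P Q) :
    Fintype.card n = Fintype.card n' := by
  obtain ⟨S, S', R, R', h1, h2, h3, h4, h5, h6⟩ := h
  exact Matrix.square_of_invertible R R' h3 h4

theorem PairEquiv.pairTranspose {P : Matrix m n ℂ × Matrix m n ℂ}
    {Q : Matrix m' n' ℂ × Matrix m' n' ℂ} (h : PairEquiv P Q) :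
    PairEquiv (pairTranspose P) (pairTranspose Q) := by
  obtain ⟨S, S', R, R', h1, h2, h3, h4, h5, h6⟩ := h
  refine ⟨Rᵀ, R'ᵀ, Sᵀ, S'ᵀ, ?_, ?_, ?_, ?_, ?_, ?_⟩ <;>
    simp only [_root_.pairTranspose, ← Matrix.transpose_mul, ← Matrix.mul_assoc, *,
      Matrix.transpose_one]

end PairEquiv

section PairSum

variable {m n m' n' m₁ n₁ m₁' n₁' : Type*}
  [Fintype m] [Fintype n] [Fintype m'] [Fintype n']
  [Fintype m₁] [Fintype n₁] [Fintype m₁'] [Fintype n₁']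
  [DecidableEq m] [DecidableEq n] [DecidableEq m'] [DecidableEq n']
  [DecidableEq m₁] [DecidableEq n₁] [DecidableEq m₁'] [DecidableEq n₁']

theorem PairEquiv.pairSum {P : Matrix m n ℂ × Matrix m n ℂ} {Q : Matrix m' n' ℂ × Matrix m' n' ℂ}
    {P₁ : Matrix m₁ n₁ ℂ × Matrix m₁ n₁ ℂ} {Q₁ : Matrix m₁' n₁' ℂ × Matrix m₁' n₁' ℂ}
    (h : PairEquiv P Q) (k : PairEquiv P₁ Q₁) : PairEquiv (pairSum P P₁) (pairSum Q Q₁) := by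
  obtain ⟨S, S', R, R', h1, h2, h3, h4, h5, h6⟩ := h
  obtain ⟨U, U', W, W', k1, k2, k3, k4, k5, k6⟩ := k
  refine ⟨fromBlocks S 0 0 U, fromBlocks S' 0 0 U', fromBlocks R 0 0 W, fromBlocks R' 0 0 W',
    ?_, ?_, ?_, ?_, ?_, ?_⟩ <;>
    simp [_root_.pairSum, fromBlocks_multiply, *]

theorem pairSum_comm (P : Matrix m n ℂ × Matrix m n ℂ) (Q : Matrix m' n' ℂ × Matrix m' n' ℂ) :
    PairEquiv (pairSum P Q) (pairSum Q P) := by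
  refine .of_reindex (Equiv.sumComm _ _) (Equiv.sumComm _ _) ?_ ?_ <;>
    · ext (i | i) (j | j) <;> simp [pairSum]

theorem pairSum_assoc (P : Matrix m n ℂ × Matrix m n ℂ) (Q : Matrix m' n' ℂ × Matrix m' n' ℂ)
    (T : Matrix m₁ n₁ ℂ × Matrix m₁ n₁ ℂ) :
    PairEquiv (pairSum (pairSum P Q) T) (pairSum P (pairSum Q T)) := by
  refine .of_reindex (Equiv.sumAssoc _ _ _).symm (Equiv.sumAssoc _ _ _).symm ?_ ?_ <;>
    · ext (i | i | i) (j | j | j) <;> simp [pairSum]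

theorem pairSum_pairTranspose_equiv_pairSkew (P : Matrix m n ℂ × Matrix m n ℂ) :
    PairEquiv (pairSum P (pairTranspose P)) (pairSkew P) := by
  refine ⟨fromBlocks 1 0 0 (-1), fromBlocks 1 0 0 (-1), fromBlocks 0 1 1 0, fromBlocks 0 1 1 0,
    ?_, ?_, ?_, ?_, ?_, ?_⟩ <;>
    simp [pairSum, pairTranspose, pairSkew, fromBlocks_multiply]

end PairSum

/-! Direct sums of lists of Kronecker blocks. -/

theorem strictEquiv_iff_pairEquiv {m n : ℕ} {P Q : Pencil m n} :
    Pencil.StrictEquiv P Q ↔ PairEquiv P Q := by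
  constructor
  · rintro ⟨S, R, hS, hR, h1, h2⟩
    rw [Matrix.isUnit_iff_isUnit_det] at hS hR
    exact ⟨S⁻¹, S, R, R⁻¹, Matrix.nonsing_inv_mul _ hS, Matrix.mul_nonsing_inv _ hS,
      Matrix.mul_nonsing_inv _ hR, Matrix.nonsing_inv_mul _ hR, h1, h2⟩
  · rintro ⟨S, S', R, R', h1, h2, h3, h4, h5, h6⟩
    refine ⟨S', R, IsUnit.of_mul_eq_one _ h2, IsUnit.of_mul_eq_one _ h3, ?_⟩
    rw [Matrix.inv_eq_right_inv h2]
    exact ⟨h5, h6⟩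

theorem pairEquiv_cast {m n m' n' : ℕ} (hm : m = m') (hn : n = n') (P : Pencil m n) :
    PairEquiv P (Pencil.cast hm hn P) :=
  .of_reindex (finCongr hm.symm) (finCongr hn.symm) rfl rfl

theorem pairSum_equiv_dsum {m n p q : ℕ} (P : Pencil m n) (Q : Pencil p q) :
    PairEquiv (pairSum P Q) (Pencil.dsum P Q) :=
  .of_reindex finSumFinEquiv.symm finSumFinEquiv.symm rfl rfl

theorem pairEquiv_pencilOfList_cons (b : KBlock) (l : List KBlock) :
    PairEquiv (pairSum b.toPencil (pencilOfList l)) (pencilOfList (b :: l)) :=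
  pairSum_equiv_dsum _ _

theorem pencilOfList_append (l l' : List KBlock) :
    PairEquiv (pairSum (pencilOfList l) (pencilOfList l')) (pencilOfList (l ++ l')) := by
  induction l with
  | nil =>
    have : IsEmpty (Fin (rowsSum [])) := Fin.isEmpty
    have : IsEmpty (Fin (colsSum [])) := Fin.isEmpty
    refine .of_reindex (Equiv.emptySum (Fin (rowsSum [])) _).symm
      (Equiv.emptySum (Fin (colsSum [])) _).symm ?_ ?_ <;>
      · ext i j
        simp [pairSum]
  | cons b t ih =>
    exact ((pairEquiv_pencilOfList_cons b t).symm.pairSum (.refl _)).trans <|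
      (pairSum_assoc _ _ _).trans <| ((PairEquiv.refl _).pairSum ih).trans <|
      pairEquiv_pencilOfList_cons b (t ++ l')

theorem pencilOfList_perm {l l' : List KBlock} (h : l.Perm l') :
    PairEquiv (pencilOfList l) (pencilOfList l') := by
  induction h with
  | nil => exact .refl _
  | cons b _ ih =>
    exact (pairEquiv_pencilOfList_cons b _).symm.trans <|
      ((PairEquiv.refl _).pairSum ih).trans (pairEquiv_pencilOfList_cons b _)
  | swap b c l =>
    have split : ∀ b c : KBlock, PairEquiv (pairSum (pairSum b.toPencil c.toPencil)
        (pencilOfList l)) (pencilOfList (b :: c :: l)) := fun b c =>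
      (pairSum_assoc _ _ _).trans <|
        ((PairEquiv.refl _).pairSum (pairEquiv_pencilOfList_cons c l)).trans
          (pairEquiv_pencilOfList_cons b (c :: l))
    exact (split c b).symm.trans <| ((pairSum_comm _ _).pairSum (.refl _)).trans (split b c)
  | trans _ _ ih ih' => exact ih.trans ih'

namespace KBlock

/-- The descriptor of the Kronecker canonical form of the transpose of a block. -/
def transpose : KBlock → KBlock
  | E k μ => E k μ
  | Einf k => Einf k
  | L k => LT k
  | LT k => L k

theorem transpose_transpose (b : KBlock) : b.transpose.transpose = b := by
  cases b <;> rfl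

theorem transpose_injective : Function.Injective transpose :=
  Function.LeftInverse.injective transpose_transpose

theorem valid.transpose {b : KBlock} (h : b.valid) : b.transpose.valid := by
  cases b <;> exact h

theorem jmat_transpose_rev (k : ℕ) (μ : ℂ) :
    (Jmat k μ)ᵀ.submatrix Fin.revPerm Fin.revPerm = Jmat k μ := by
  ext i j
  have h1 : ((k : ℕ) - (i + 1) = k - (j + 1)) ↔ ((j : ℕ) = i) := by omega
  have h2 : ((k : ℕ) - (i + 1) = k - (j + 1) + 1) ↔ ((j : ℕ) = i + 1) := by omega
  simp [Jmat, Fin.val_rev, h1, h2]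

theorem one_transpose_rev (k : ℕ) :
    (1 : Matrix (Fin k) (Fin k) ℂ)ᵀ.submatrix Fin.revPerm Fin.revPerm = 1 := by
  simp

theorem toPencil_transpose (b : KBlock) :
    PairEquiv (pairTranspose b.toPencil) b.transpose.toPencil := by
  cases b with
  | E k μ =>
    exact .of_reindex Fin.revPerm Fin.revPerm (jmat_transpose_rev k μ)
      (one_transpose_rev k)
  | Einf k =>
    exact .of_reindex Fin.revPerm Fin.revPerm (one_transpose_rev k)
      (jmat_transpose_rev k 0)
  | L k => exact .refl _
  | LT k => exact .refl _

end KBlock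

theorem pencilOfList_map_transpose (l : List KBlock) :
    PairEquiv (pairTranspose (pencilOfList l)) (pencilOfList (l.map KBlock.transpose)) := by
  induction l with
  | nil => exact .refl _
  | cons b t ih =>
    have h : PairEquiv (pairTranspose (pairSum b.toPencil (pencilOfList t)))
        (pairSum (pairTranspose b.toPencil) (pairTranspose (pencilOfList t))) := by
      refine .of_reindex (Equiv.refl _) (Equiv.refl _) ?_ ?_ <;>
        simp [pairTranspose, pairSum, fromBlocks_transpose]
    exact (pairEquiv_pencilOfList_cons b t).pairTranspose.symm.trans <|
      h.trans <| (b.toPencil_transpose.pairSum ih).trans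
        (pairEquiv_pencilOfList_cons _ _)

theorem pencilOfList_append_transpose_equiv_pairSkew (l : List KBlock) :
    PairEquiv (pencilOfList (l ++ l.map KBlock.transpose)) (pairSkew (pencilOfList l)) :=
  (pencilOfList_append _ _).symm.trans <|
    ((PairEquiv.refl _).pairSum (pencilOfList_map_transpose l).symm).trans
      (pairSum_pairTranspose_equiv_pairSkew _)

theorem Multiset.exists_eq_add_map_transpose [DecidableEq KBlock] (s : Multiset KBlock)
    (hE : ∀ (k : ℕ) (μ : ℂ), Even (s.count (KBlock.E k μ)))
    (hI : ∀ k : ℕ, Even (s.count (KBlock.Einf k)))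
    (hL : ∀ k : ℕ, s.count (KBlock.L k) = s.count (KBlock.LT k)) :
    ∃ t : Multiset KBlock, s = t + t.map KBlock.transpose := by
  let g : KBlock → ℕ := fun b => match b with
    | .E k μ => s.count (.E k μ) / 2
    | .Einf k => s.count (.Einf k) / 2
    | .L k => s.count (.L k)
    | .LT _ => 0
  have hg : ∀ b, g b ≠ 0 → b ∈ s.toFinset := by
    intro b hb
    rw [Multiset.mem_toFinset, ← Multiset.count_pos]
    cases b <;> simp only [g] at hb <;> omega
  let f : KBlock →₀ ℕ := Finsupp.onFinset s.toFinset g hg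
  have hf : ∀ b, (Finsupp.toMultiset f).count b = g b := fun b => by
    rw [Finsupp.count_toMultiset]; rfl
  refine ⟨Finsupp.toMultiset f, Multiset.ext.2 fun b => ?_⟩
  have h2 := Multiset.count_map_eq_count' KBlock.transpose (Finsupp.toMultiset f)
    KBlock.transpose_injective b.transpose
  rw [KBlock.transpose_transpose] at h2
  rw [Multiset.count_add, h2, hf, hf]
  cases b with
  | E k μ => have := (hE k μ).two_dvd; simp only [g, KBlock.transpose]; omega
  | Einf k => have := (hI k).two_dvd; simp only [g, KBlock.transpose]; omega
  | L k => simp [g, KBlock.transpose]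
  | LT k => simp [g, KBlock.transpose, hL]

theorem Multiset.count_add_map_transpose [DecidableEq KBlock] (t : Multiset KBlock) (b : KBlock) :
    (t + t.map KBlock.transpose).count b = t.count b + t.count b.transpose := by
  rw [Multiset.count_add]
  congr 1
  simpa [KBlock.transpose_transpose] using Multiset.count_map_eq_count' KBlock.transpose t
    KBlock.transpose_injective b.transpose

/-! Chains for a pair of skew-symmetric forms. -/

section Chains

open Module

variable {V : Type*} [AddCommGroup V] [Module ℂ V]

/-- The vectors `v` that start a sequence `v = v₀, …, v_m` with `q v_i = p v_{i+1}` and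
`v_m ∈ S`. -/
def chainStart (p q : V →ₗ[ℂ] Dual ℂ V) (S : Submodule ℂ V) : ℕ → Submodule ℂ V
  | 0 => S
  | m + 1 => ((chainStart p q S m).map p).comap q

/-- The functionals `q z₁` for the sequences `z₁, …, z_m` with `p z_i = q z_{i+1}` and
`p z_m = 0`. -/
def chainDual (p q : V →ₗ[ℂ] Dual ℂ V) : ℕ → Submodule ℂ (Dual ℂ V)
  | 0 => ⊥
  | m + 1 => ((chainDual p q m).comap p).map q

theorem exists_chain_of_mem_chainStart {p q : V →ₗ[ℂ] Dual ℂ V} {S : Submodule ℂ V} {m : ℕ}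
    {v : V} (hv : v ∈ chainStart p q S m) :
    ∃ x : ℕ → V, x 0 = v ∧ (∀ i < m, q (x i) = p (x (i + 1))) ∧ x m ∈ S := by
  induction m generalizing v with
  | zero => exact ⟨fun _ => v, rfl, by simp, hv⟩
  | succ m ih =>
    obtain ⟨w, hw, hwv⟩ := hv
    obtain ⟨x, h0, hx, hS⟩ := ih hw
    refine ⟨fun i => Nat.casesOn i v x, rfl, ?_, hS⟩
    rintro (_ | i) hi
    · simp [h0, hwv]
    · exact hx i (by omega)

theorem mem_chainStart_of_chain {p q : V →ₗ[ℂ] Dual ℂ V} {S : Submodule ℂ V} {m : ℕ}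
    {x : ℕ → V} (hx : ∀ i < m, q (x i) = p (x (i + 1))) (hS : x m ∈ S) :
    x 0 ∈ chainStart p q S m := by
  induction m generalizing x with
  | zero => exact hS
  | succ m ih =>
    exact ⟨x 1, ih (x := fun i => x (i + 1)) (fun i hi => hx (i + 1) (by omega)) hS,
      (hx 0 (by omega)).symm⟩

theorem mem_chainStart_of_eq_add_chainDual {p q : V →ₗ[ℂ] Dual ℂ V} (m r : ℕ) (x : ℕ → V)
    (hx : ∀ i < m, q (x i) = p (x (i + 1))) (d : Dual ℂ V) (hd : d ∈ chainDual p q m) (z : V)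
    (hz : z ∈ chainStart p q ⊤ r) (h : q (x m) + d = p z) :
    x 0 ∈ chainStart p q ⊤ (m + 1 + r) := by
  induction m generalizing r d z with
  | zero =>
    obtain rfl : d = 0 := hd
    rw [add_comm]
    exact ⟨z, by simpa using hz, by simpa using h.symm⟩
  | succ m ih =>
    obtain ⟨w, hw, rfl⟩ := hd
    have h1 : x (m + 1) + w ∈ chainStart p q ⊤ (r + 1) := ⟨z, hz, by rw [map_add, h]⟩
    have := ih (r + 1) (fun i hi => hx i (by omega)) (p w) hw (x (m + 1) + w) h1
      (by rw [map_add, hx m (by omega)])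
    convert this using 2
    omega

theorem mem_chainStart_ker_of_mem_chainDual {p q : V →ₗ[ℂ] Dual ℂ V} (m : ℕ) (x : V)
    (hx : q x ∈ chainDual q p m) : x ∈ chainStart p q (LinearMap.ker q) m := by
  induction m generalizing x with
  | zero => exact hx
  | succ m ih =>
    obtain ⟨w, hw, hwx⟩ := hx
    exact ⟨w, ih w hw, hwx⟩

theorem exists_last_ne_zero {c : ℕ → ℂ} {x : ℕ → V} (N : ℕ)
    (hsum : ∑ i ∈ Finset.range N, c i • x i = 0) (hne : ∃ i < N, c i ≠ 0) :
    ∃ m < N, c m ≠ 0 ∧ ∑ i ∈ Finset.range (m + 1), c i • x i = 0 := by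
  induction N with
  | zero => simp at hne
  | succ N ih =>
    by_cases hN : c N = 0
    · obtain ⟨i, hi, hci⟩ := hne
      have hiN : i ≠ N := fun h => hci (h ▸ hN)
      obtain ⟨m, hm, h⟩ := ih (by simpa [Finset.sum_range_succ, hN] using hsum)
        ⟨i, by omega, hci⟩
      exact ⟨m, by omega, h⟩
    · exact ⟨N, by omega, hN, hsum⟩

variable [FiniteDimensional ℂ V]

theorem exists_eq_of_vanish_comap_map {p q : V →ₗ[ℂ] Dual ℂ V} (hp : ∀ x y, p x y = -p y x)
    (hq : ∀ x y, q x y = -q y x) (S : Submodule ℂ V) (l : Dual ℂ V)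
    (hl : ∀ v ∈ (S.map p).comap q, l v = 0) : ∃ z, q z = l ∧ ∀ s ∈ S, p z s = 0 := by
  have h : l ∈ (LinearMap.ker ((S.map p).mkQ ∘ₗ q)).dualAnnihilator := by
    rw [Submodule.mem_dualAnnihilator]
    intro v hv
    exact hl v (by simpa [LinearMap.mem_ker, Submodule.Quotient.mk_eq_zero] using hv)
  rw [← LinearMap.range_dualMap_eq_dualAnnihilator_ker] at h
  obtain ⟨g, rfl⟩ := h
  obtain ⟨z, hz⟩ := (evalEquiv ℂ V).surjective (g ∘ₗ (S.map p).mkQ)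
  have hz' : ∀ f : Dual ℂ V, f z = g ((S.map p).mkQ f) := fun f => by
    simpa using LinearMap.congr_fun hz f
  refine ⟨-z, ?_, fun s hs => ?_⟩
  · ext v
    rw [map_neg, LinearMap.neg_apply, ← hq, hz']
    rfl
  · rw [map_neg, LinearMap.neg_apply, ← hp, hz']
    have : (S.map p).mkQ (p s) = 0 := by
      simpa using ⟨s, hs, rfl⟩
    rw [this, map_zero]

theorem mem_chainDual_of_vanish {p q : V →ₗ[ℂ] Dual ℂ V} (hp : ∀ x y, p x y = -p y x)
    (hq : ∀ x y, q x y = -q y x) (m : ℕ) (l : Dual ℂ V)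
    (hl : ∀ v ∈ chainStart p q ⊤ m, l v = 0) : l ∈ chainDual p q m := by
  induction m generalizing l with
  | zero =>
    show l = 0
    ext v
    exact hl v trivial
  | succ m ih =>
    obtain ⟨z, hz, h⟩ := exists_eq_of_vanish_comap_map hp hq _ l hl
    exact ⟨z, ih _ h, hz⟩

theorem exists_eqOn_of_vanish_ker_inf {p : V →ₗ[ℂ] Dual ℂ V} (hp : ∀ x y, p x y = -p y x)
    (S : Submodule ℂ V) (l : Dual ℂ V) (hl : ∀ v ∈ LinearMap.ker p ⊓ S, l v = 0) :
    ∃ z, ∀ s ∈ S, p z s = l s := by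
  have h : l ∈ (LinearMap.ker p ⊓ S).dualAnnihilator := by
    rwa [Submodule.mem_dualAnnihilator]
  rw [Subspace.dualAnnihilator_inf_eq, ← LinearMap.range_dualMap_eq_dualAnnihilator_ker,
    Submodule.mem_sup] at h
  obtain ⟨_, ⟨g, rfl⟩, d, hd, rfl⟩ := h
  obtain ⟨z, hz⟩ := (evalEquiv ℂ V).surjective g
  rw [Submodule.mem_dualAnnihilator] at hd
  refine ⟨-z, fun s hs => ?_⟩
  rw [map_neg, LinearMap.neg_apply, ← hp, LinearMap.add_apply, hd s hs, add_zero, ← hz]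
  rfl

theorem exists_dual_chain {p q : V →ₗ[ℂ] Dual ℂ V} (hp : ∀ x y, p x y = -p y x)
    (hq : ∀ x y, q x y = -q y x) (h : ℕ) (x : ℕ → V)
    (hx : ∀ i < h, q (x i) = p (x (i + 1))) (hmax : x 0 ∉ chainStart p q ⊤ (h + 1)) :
    ∃ y : ℕ → V, p (y 0) = 0 ∧ (∀ i < h, q (y i) = p (y (i + 1))) ∧ q (x h) (y 0) ≠ 0 := by
  by_contra! hcon
  refine hmax ?_
  have hvan : ∀ v ∈ LinearMap.ker p ⊓ chainStart p q ⊤ h, q (x h) v = 0 := by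
    rintro v ⟨hv, hv'⟩
    obtain ⟨y, rfl, hy, -⟩ := exists_chain_of_mem_chainStart hv'
    exact hcon y hv hy
  obtain ⟨z, hz⟩ := exists_eqOn_of_vanish_ker_inf hp _ _ hvan
  have hd : p z - q (x h) ∈ chainDual p q h :=
    mem_chainDual_of_vanish hp hq h _ fun v hv => by simp [hz v hv]
  exact mem_chainStart_of_eq_add_chainDual h 0 x hx _ hd z trivial (by abel)

theorem exists_chain_of_notMem_chainStart_ker {p q : V →ₗ[ℂ] Dual ℂ V}
    (hp : ∀ x y, p x y = -p y x) (hq : ∀ x y, q x y = -q y x) (m : ℕ) (x : V)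
    (hx : x ∉ chainStart p q (LinearMap.ker q) m) :
    ∃ y : ℕ → V, (∀ i < m, p (y i) = q (y (i + 1))) ∧ q x (y 0) = 1 := by
  by_contra! hcon
  refine hx (mem_chainStart_ker_of_mem_chainDual m x ?_)
  refine mem_chainDual_of_vanish hq hp m _ fun v hv => ?_
  obtain ⟨y, rfl, hy, -⟩ := exists_chain_of_mem_chainStart hv
  by_contra hne
  refine hcon (fun i => (q x (y 0))⁻¹ • y i) (fun i hi => by simp [hy i hi]) ?_
  simp [inv_mul_cancel₀ hne]

/-- A chain longer than the dimension can be recombined into one that terminates. -/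
theorem exists_mem_chainStart_ker {p q : V →ₗ[ℂ] Dual ℂ V} (x : ℕ → V) (h0 : p (x 0) = 0)
    (hx0 : x 0 ≠ 0) (hx : ∀ i < finrank ℂ V, q (x i) = p (x (i + 1))) :
    ∃ m, ∃ v ∈ chainStart p q (LinearMap.ker q) m, v ≠ 0 ∧ p v = 0 := by
  obtain ⟨m, hm, c, hcm, hsum⟩ : ∃ m ≤ finrank ℂ V, ∃ c : ℕ → ℂ, c m ≠ 0 ∧
      ∑ i ∈ Finset.range (m + 1), c i • x i = 0 := by
    have hdep : ¬ LinearIndependent ℂ (fun i : Fin (finrank ℂ V + 1) => x i) := fun h => by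
      have := h.fintype_card_le_finrank
      simp at this
    obtain ⟨g, hg, i, hi⟩ := Fintype.not_linearIndependent_iff.1 hdep
    let c : ℕ → ℂ := fun i => if h : i < finrank ℂ V + 1 then g ⟨i, h⟩ else 0
    have hc : ∀ i : Fin (finrank ℂ V + 1), c i = g i := fun i => dif_pos i.2
    obtain ⟨m, hm, h⟩ := exists_last_ne_zero (c := c) (x := x) (finrank ℂ V + 1)
      (by rw [← Fin.sum_univ_eq_sum_range (fun i => c i • x i)]; simpa only [hc] using hg)
      ⟨i, i.2, by rwa [hc]⟩
    exact ⟨m, by omega, c, h⟩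
  let s : ℕ → ℕ → V := fun t j => if t ≤ j then x (j - t) else 0
  have hs0 : ∀ t, p (s t 0) = 0 := fun t => by
    by_cases ht : t = 0 <;> simp [s, ht, h0]
  have hs : ∀ t, ∀ j < m, q (s t j) = p (s t (j + 1)) := fun t j hj => by
    by_cases ht : t ≤ j
    · simp only [s, ht, le_add_right ht, if_true]
      rw [hx _ (by omega), show j - t + 1 = j + 1 - t by omega]
    · by_cases ht' : t = j + 1
      · simp [s, ht', h0]
      · simp [s, ht, show ¬ t ≤ j + 1 by omega]
  let w : ℕ → V := fun j => ∑ i ∈ Finset.range (m + 1), c i • s (m - i) j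
  have hw0 : w 0 = c m • x 0 := by
    simp only [w, Finset.sum_range_succ]
    rw [Finset.sum_eq_zero]
    · simp [s]
    · intro i hi
      have := Finset.mem_range.1 hi
      simp [s, show m - i ≠ 0 by omega]
  have hwm : w m = 0 := by
    rw [← hsum]
    refine Finset.sum_congr rfl fun i hi => ?_
    have := Finset.mem_range.1 hi
    simp [s, show m - (m - i) = i by omega]
  refine ⟨m, w 0, mem_chainStart_of_chain (fun i hi => ?_) ?_, ?_, ?_⟩
  · simp only [w, map_sum, map_smul]
    exact Finset.sum_congr rfl fun j _ => by rw [hs _ i hi]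
  · rw [hwm]; exact zero_mem _
  · rw [hw0]; exact smul_ne_zero hcm hx0
  · simp [w, hs0]

end Chains

/-! Splitting off one canonical summand. -/

section Summands

open Module

variable {V : Type*} [AddCommGroup V] [Module ℂ V]

/-- The forms `a`, `b` have an orthogonal summand with matrices `pairSkew X`; the complement is
the common kernel of the functionals `ψ`. -/
def HasSummand (a b : V →ₗ[ℂ] Dual ℂ V) {r c : ℕ} (X : Pencil r c) : Prop :=
  ∃ (e : Fin r ⊕ Fin c → V) (ψ : Fin r ⊕ Fin c → Dual ℂ V),
    (∀ i j, ψ i (e j) = if i = j then 1 else 0) ∧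
    (∀ v, (∀ i, ψ i v = 0) → ∀ i, a (e i) v = 0 ∧ b (e i) v = 0) ∧
    ∀ i j, a (e i) (e j) = (pairSkew X).1 i j ∧ b (e i) (e j) = (pairSkew X).2 i j

theorem chain_isotropic {p q : V →ₗ[ℂ] Dual ℂ V} (hp : ∀ x y, p x y = -p y x)
    (hq : ∀ x y, q x y = -q y x) {h : ℕ} {x : ℕ → V} (hx : ∀ i < h, q (x i) = p (x (i + 1)))
    {i j : ℕ} (hi : i ≤ h) (hj : j ≤ h) : q (x i) (x j) = 0 := by
  have shift : ∀ t i j, i + t ≤ h → j + t ≤ h → q (x i) (x (j + t)) = q (x (i + t)) (x j) := by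
    intro t
    induction t with
    | zero => simp
    | succ t ih =>
      intro i j hi hj
      rw [hx i (by omega), hp, ← add_assoc, ← hx (j + t) (by omega), ← hq, ih (i + 1) j (by omega)
        (by omega)]
      congr 3; omega
  have main : ∀ i j, i ≤ j → j ≤ h → q (x i) (x j) = 0 := by
    intro i j hij hj
    obtain ⟨d, rfl⟩ := Nat.exists_eq_add_of_le hij
    have h1 := shift d i i hj hj
    rw [hq (x (i + d))] at h1
    exact self_eq_neg.1 h1
  rcases le_total i j with hij | hij
  · exact main i j hij hj
  · rw [hq, main j i hij hi, neg_zero]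

theorem hasSummand_lblk_zero {a b : V →ₗ[ℂ] Dual ℂ V} {x : V} (hx : x ≠ 0) (ha : a x = 0)
    (hb : b x = 0) : HasSummand a b (Lblk 0) := by
  obtain ⟨f, hf⟩ := Projective.exists_dual_eq_one ℂ hx
  refine ⟨fun _ => x, fun _ => f, ?_, fun v _ i => by simp [ha, hb], ?_⟩
  · rintro (i | i) (j | j)
    · exact i.elim0
    · exact i.elim0
    · exact j.elim0
    · obtain rfl : i = j := Fin.ext (by omega)
      simp [hf]
  · rintro (i | i) (j | j)
    · exact i.elim0
    · exact i.elim0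
    · exact j.elim0
    · simp [ha, hb, pairSkew]

theorem hasSummand_lblk_succ {p q : V →ₗ[ℂ] Dual ℂ V} (hp : ∀ x y, p x y = -p y x)
    (hq : ∀ x y, q x y = -q y x) {m : ℕ} {x y : ℕ → V} (hx0 : p (x 0) = 0)
    (hx : ∀ i < m + 1, q (x i) = p (x (i + 1))) (hxm : q (x (m + 1)) = 0)
    (hy : ∀ i < m, p (y i) = q (y (i + 1))) (hxy : q (x 0) (y 0) = 1) :
    HasSummand q p (Lblk (m + 1)) := by
  have hxx : ∀ i j, i ≤ m + 1 → j ≤ m + 1 → q (x i) (x j) = 0 := fun i j hi hj =>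
    chain_isotropic hp hq hx hi hj
  have hxx' : ∀ i j, i ≤ m + 1 → j ≤ m + 1 → p (x i) (x j) = 0 := by
    rintro (_ | i) j hi hj
    · simp [hx0]
    · rw [← hx i (by omega), hxx i j (by omega) hj]
  have hyy : ∀ i j, i ≤ m → j ≤ m → p (y i) (y j) = 0 := fun i j hi hj =>
    chain_isotropic hq hp hy hi hj
  have hyy' : ∀ i j, i ≤ m → j ≤ m → q (y i) (y j) = 0 := by
    rintro (_ | i) (_ | j) hi hj
    · exact self_eq_neg.1 (hq _ _)
    · rw [hq, ← hy j (by omega), hyy j 0 (by omega) (by omega), neg_zero]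
    · rw [← hy i (by omega), hyy i 0 (by omega) (by omega)]
    · rw [← hy i (by omega), hyy i (j + 1) (by omega) (by omega)]
  have shift : ∀ t i j, i + t ≤ m + 1 → j + t ≤ m → q (x i) (y j) = q (x (i + t)) (y (j + t)) := by
    intro t
    induction t with
    | zero => simp
    | succ t ih =>
      intro i j hi hj
      rw [ih i j (by omega) (by omega), hx (i + t) (by omega), hp, hy (j + t) (by omega), ← hq]
      rfl
  have hxy' : ∀ i j, i ≤ m + 1 → j ≤ m → q (x i) (y j) = if i = j then 1 else 0 := by
    intro i j hi hj
    split_ifs with hij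
    · subst hij
      have := shift i 0 0 (by omega) (by omega)
      rw [← hxy, this]; simp
    · rcases lt_or_gt_of_ne hij with hij | hij
      · obtain ⟨d, rfl⟩ := Nat.exists_eq_add_of_lt hij
        have := shift i 0 (d + 1) (by omega) (by omega)
        rw [show i + d + 1 = d + 1 + i by omega]
        nth_rewrite 1 [show i = 0 + i by omega]
        rw [← this, hq, ← hy d (by omega), ← hp, hx0, LinearMap.zero_apply]
      · obtain ⟨d, rfl⟩ := Nat.exists_eq_add_of_lt hij
        rw [shift (m - (j + d)) (j + d + 1) j (by omega) (by omega),
          show j + d + 1 + (m - (j + d)) = m + 1 by omega, hxm, LinearMap.zero_apply]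
  have hpxy : ∀ i j, i ≤ m + 1 → j ≤ m → p (x i) (y j) = if i = j + 1 then 1 else 0 := by
    rintro (_ | i) j hi hj
    · simp [hx0]
    · rw [← hx i (by omega), hxy' i j (by omega) hj]
      simp
  let χ : ℕ → Dual ℂ V := fun l => Nat.casesOn l (-q (y 0)) fun l => -p (y l)
  have hχx : ∀ l i, l ≤ m + 1 → i ≤ m + 1 → χ l (x i) = if i = l then 1 else 0 := by
    rintro (_ | l) i hl hi
    · show -q (y 0) (x i) = _
      rw [← hq, hxy' i 0 hi (by omega)]
    · show -p (y l) (x i) = _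
      rw [← hp, hpxy i l hi (by omega)]
  have hχy : ∀ l i, l ≤ m + 1 → i ≤ m → χ l (y i) = 0 := by
    rintro (_ | l) i hl hi
    · show -q (y 0) (y i) = _
      rw [hyy' 0 i (by omega) hi, neg_zero]
    · show -p (y l) (y i) = _
      rw [hyy l i (by omega) hi, neg_zero]
  refine ⟨Sum.elim (fun j => -y (m - j)) fun i => x (m + 1 - i),
    Sum.elim (fun j => -q (x (m - j))) fun i => χ (m + 1 - i), ?_, ?_, ?_⟩
  · rintro (i | i) (j | j)
    · have := i.2; have := j.2
      simp only [Sum.elim_inl, map_neg, LinearMap.neg_apply, neg_neg, Sum.inl.injEq, Fin.ext_iff]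
      rw [hxy' _ _ (by omega) (by omega)]
      congr 1; apply propext; omega
    · simp [hxx (m - i) (m + 1 - j) (by omega) (by omega)]
    · simp [hχy (m + 1 - i) (m - j) (by omega) (by omega)]
    · have := i.2; have := j.2
      simp only [Sum.elim_inr, Sum.inr.injEq, Fin.ext_iff]
      rw [hχx _ _ (by omega) (by omega)]
      congr 1; apply propext; omega
  · intro v hv
    have hqx : ∀ i ≤ m + 1, q (x i) v = 0 := by
      intro i hi
      rcases hi.lt_or_eq with hi | rfl
      · have := hv (Sum.inl ⟨m - i, by omega⟩)
        simpa [show m - (m - i) = i by omega] using this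
      · simp [hxm]
    have hpx : ∀ i ≤ m + 1, p (x i) v = 0 := by
      rintro (_ | i) hi
      · simp [hx0]
      · rw [← hx i (by omega), hqx i (by omega)]
    have hχv : ∀ l ≤ m + 1, χ l v = 0 := fun l hl => by
      have := hv (Sum.inr ⟨m + 1 - l, by omega⟩)
      simpa [show m + 1 - (m + 1 - l) = l by omega] using this
    have hpy : ∀ i ≤ m, p (y i) v = 0 := fun i hi => neg_eq_zero.1 (hχv (i + 1) (by omega))
    have hqy : ∀ i ≤ m, q (y i) v = 0 := by
      rintro (_ | i) hi
      · exact neg_eq_zero.1 (hχv 0 (by omega))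
      · rw [← hy i (by omega), hpy i (by omega)]
    rintro (i | i)
    · simp [hpy (m - i) (by omega), hqy (m - i) (by omega)]
    · exact ⟨hqx _ (by omega), hpx _ (by omega)⟩
  · have hcross : ∀ (j : Fin (m + 1)) (i : Fin (m + 1 + 1)),
        q (x (m + 1 - i)) (y (m - j)) = Fmat (m + 1) j i ∧
        p (x (m + 1 - i)) (y (m - j)) = Gmat (m + 1) j i := by
      intro j i
      have := i.2; have := j.2
      rw [hxy' _ _ (by omega) (by omega), hpxy _ _ (by omega) (by omega)]
      simp only [Fmat, Gmat, of_apply]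
      constructor <;> (congr 1; apply propext; omega)
    rintro (i | i) (j | j)
    · simp [pairSkew, hyy' (m - i) (m - j) (by omega) (by omega),
        hyy (m - i) (m - j) (by omega) (by omega)]
    · simp only [Sum.elim_inl, Sum.elim_inr, map_neg, LinearMap.neg_apply, pairSkew,
        fromBlocks_apply₁₂, Lblk]
      rw [← hq, ← hp]
      exact hcross i j
    · simpa [pairSkew, Lblk] using hcross j i
    · simp [pairSkew, hxx (m + 1 - i) (m + 1 - j) (by omega) (by omega),
        hxx' (m + 1 - i) (m + 1 - j) (by omega) (by omega)]

theorem hasSummand_jordan {p q : V →ₗ[ℂ] Dual ℂ V} (hp : ∀ x y, p x y = -p y x)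
    (hq : ∀ x y, q x y = -q y x) {h : ℕ} {x y : ℕ → V} (hx0 : p (x 0) = 0)
    (hx : ∀ i < h, q (x i) = p (x (i + 1))) (hy0 : p (y 0) = 0)
    (hy : ∀ i < h, q (y i) = p (y (i + 1))) (hxy : q (x h) (y 0) ≠ 0) :
    HasSummand p q ((Jmat (h + 1) 0, 1) : Pencil (h + 1) (h + 1)) := by
  have shift : ∀ t i j, i + t ≤ h → j + t ≤ h → q (x i) (y (j + t)) = q (x (i + t)) (y j) := by
    intro t
    induction t with
    | zero => simp
    | succ t ih =>
      intro i j hi hj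
      rw [hx i (by omega), hp, ← add_assoc, ← hy (j + t) (by omega), ← hq, ih (i + 1) j (by omega)
        (by omega)]
      congr 3; omega
  have hlt : ∀ i j, i + j < h → q (x i) (y j) = 0 := fun i j hij => by
    have := shift j i 0 (by omega) (by omega)
    rw [zero_add] at this
    rw [this, hx _ (by omega), hp, hy0, LinearMap.zero_apply, neg_zero]
  have heq : ∀ i j, i + j = h → q (x i) (y j) = q (x h) (y 0) := fun i j hij => by
    have := shift j i 0 (by omega) (by omega)
    rw [zero_add] at this
    rw [this, hij]
  let N : Matrix (Fin (h + 1)) (Fin (h + 1)) ℂ := Matrix.of fun i j => q (x (h - i)) (y j)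
  have hN : IsUnit N.det := by
    have htri : N.BlockTriangular id := by
      intro i j hij
      have hij : (j : ℕ) < i := hij
      exact hlt _ _ (by omega)
    rw [Matrix.det_of_isUpperTriangular htri, isUnit_iff_ne_zero, Finset.prod_ne_zero_iff]
    intro i _
    show q (x (h - i)) (y i) ≠ 0
    rwa [heq _ _ (by omega)]
  let z : Fin (h + 1) → V := fun j => ∑ l, N⁻¹ l j • y l
  have hxz : ∀ i j : Fin (h + 1), q (x (h - i)) (z j) = if i = j then 1 else 0 := fun i j => by
    have := congrFun (congrFun (Matrix.mul_nonsing_inv N hN) i) j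
    rw [Matrix.mul_apply, Matrix.one_apply] at this
    rw [← this]
    simp [z, N, mul_comm]
  have hpxz : ∀ i j : Fin (h + 1), p (x (h - i)) (z j) = Jmat (h + 1) 0 i j := fun i j => by
    have := i.2; have := j.2
    rcases Nat.lt_or_ge i h with hi | hi
    · have h1 := hxz ⟨i + 1, by omega⟩ j
      rw [show h - i = h - (i + 1) + 1 by omega, ← hx _ (by omega), h1]
      simp only [Jmat, Fin.ext_iff, of_apply]
      split_ifs <;> first | rfl | omega
    · rw [show h - i = 0 by omega, hx0]
      simp only [Jmat, of_apply, LinearMap.zero_apply]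
      split_ifs <;> first | rfl | omega
  have hxx : ∀ i j, i ≤ h → j ≤ h → q (x i) (x j) = 0 := fun i j hi hj =>
    chain_isotropic hp hq hx hi hj
  have hyy : ∀ i j, i ≤ h → j ≤ h → q (y i) (y j) = 0 := fun i j hi hj =>
    chain_isotropic hp hq hy hi hj
  have hpxx : ∀ v, (∀ i ≤ h, q (x i) v = 0) → ∀ i ≤ h, p (x i) v = 0 := by
    rintro v hv (_ | i) hi
    · simp [hx0]
    · rw [← hx i (by omega), hv i (by omega)]
  have hpyy : ∀ v, (∀ i ≤ h, q (y i) v = 0) → ∀ i ≤ h, p (y i) v = 0 := by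
    rintro v hv (_ | i) hi
    · simp [hy0]
    · rw [← hy i (by omega), hv i (by omega)]
  have hyz : ∀ i ≤ h, ∀ j, q (y i) (z j) = 0 := fun i hi j => by
    simp only [z, map_sum, map_smul]
    exact Finset.sum_eq_zero fun l _ => by rw [hyy i l hi (by omega), smul_zero]
  have hz : ∀ (r : V →ₗ[ℂ] Dual ℂ V) (v : V), (∀ i ≤ h, r (y i) v = 0) → ∀ j, r (z j) v = 0 :=
    fun r v hv j => by
      simp only [z, map_sum, map_smul, LinearMap.sum_apply, LinearMap.smul_apply]
      exact Finset.sum_eq_zero fun l _ => by rw [hv l (by omega), smul_zero]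
  have hzz : ∀ i j, q (z i) (z j) = 0 ∧ p (z i) (z j) = 0 := fun i j => by
    have hpyz : ∀ i ≤ h, p (y i) (z j) = 0 := hpyy (z j) fun i hi => hyz i hi j
    exact ⟨hz q _ (fun l hl => hyz l hl j) i, hz p _ hpyz i⟩
  have hyspan : ∀ v, (∀ j, q (z j) v = 0) → ∀ i : Fin (h + 1), q (y i) v = 0 := fun v hv i => by
    have hyi : y i = ∑ j, N j i • z j := by
      simp only [z, Finset.smul_sum, smul_smul]
      rw [Finset.sum_comm]
      have hcoef : ∀ l, ∑ j, N j i * N⁻¹ l j = if l = i then 1 else 0 := fun l => by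
        have := congrFun (congrFun (Matrix.nonsing_inv_mul N hN) l) i
        rw [Matrix.mul_apply, Matrix.one_apply] at this
        simpa only [mul_comm] using this
      simp [← Finset.sum_smul, hcoef]
    simp [hyi, hv]
  refine ⟨Sum.elim (fun i => x (h - i)) z, Sum.elim (fun i => -q (z i)) fun j => q (x (h - j)),
    ?_, ?_, ?_⟩
  · rintro (i | i) (j | j)
    · simp only [Sum.elim_inl, LinearMap.neg_apply, ← hq, hxz, Sum.inl.injEq, eq_comm]
    · simp [hzz]
    · simp [hxx (h - i) (h - j) (by omega) (by omega)]
    · simp [hxz]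
  · intro v hv
    have hqx : ∀ i ≤ h, q (x i) v = 0 := fun i hi => by
      simpa [show h - (h - i) = i by omega] using hv (Sum.inr ⟨h - i, by omega⟩)
    have hqz : ∀ j, q (z j) v = 0 := fun j => neg_eq_zero.1 (hv (Sum.inl j))
    have hpy := hpyy v fun i hi => hyspan v hqz ⟨i, by omega⟩
    rintro (i | i)
    · exact ⟨hpxx v hqx _ (by simp), hqx _ (by simp)⟩
    · exact ⟨hz p v hpy i, hqz i⟩
  · rintro (i | i) (j | j)
    · simp [pairSkew, hxx (h - i) (h - j) (by omega) (by omega),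
        hpxx (x (h - j)) (fun i hi => hxx i _ hi (by omega)) (h - i) (by omega)]
    · simp [pairSkew, hxz, hpxz, Matrix.one_apply]
    · simp only [Sum.elim_inl, Sum.elim_inr, pairSkew, fromBlocks_apply₂₁, Matrix.neg_apply,
        transpose_apply, ← hpxz, Matrix.one_apply, ← hxz]
      exact ⟨hp _ _, hq _ _⟩
    · simp [pairSkew, hzz]

end Summands

section Decomposition

open Module

section

variable {V : Type*} [AddCommGroup V] [Module ℂ V]

theorem HasSummand.swap {a b : V →ₗ[ℂ] Dual ℂ V} {r c : ℕ} {X : Pencil r c}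
    (h : HasSummand a b X) : HasSummand b a (X.2, X.1) := by
  obtain ⟨e, ψ, h1, h2, h3⟩ := h
  exact ⟨e, ψ, h1, fun v hv i => (h2 v hv i).symm, fun i j => (h3 i j).symm⟩

theorem HasSummand.jordan_shift {a b : V →ₗ[ℂ] Dual ℂ V} {h : ℕ} {μ : ℂ}
    (hs : HasSummand (a - μ • b) b ((Jmat h 0, 1) : Pencil h h)) :
    HasSummand a b (Eblk h μ) := by
  obtain ⟨e, ψ, h1, h2, h3⟩ := hs
  have ha : ∀ v w, a v w = (a - μ • b) v w + μ * b v w := fun v w => by simp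
  have hJ : Jmat h μ = Jmat h 0 + μ • (1 : Matrix (Fin h) (Fin h) ℂ) := by
    ext i j
    by_cases hij : i = j
    · simp [Jmat, hij]
    · have hij' : ¬ (j : ℕ) = i := fun h => hij (Fin.ext h.symm)
      simp [Jmat, hij, hij']
  refine ⟨e, ψ, h1, fun v hv i => ⟨?_, (h2 v hv i).2⟩, fun i j => ⟨?_, (h3 i j).2⟩⟩
  · rw [ha, (h2 v hv i).1, (h2 v hv i).2]; simp
  · rw [ha, (h3 i j).1, (h3 i j).2]
    rcases i with i | i <;> rcases j with j | j <;> simp [pairSkew, Eblk, hJ]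
    ring

theorem chainStart_bot {p q : V →ₗ[ℂ] Dual ℂ V} (hq : LinearMap.ker q = ⊥) (m : ℕ) :
    chainStart p q ⊥ m = ⊥ := by
  induction m with
  | zero => rfl
  | succ m ih => rw [chainStart, ih, Submodule.map_bot, ← hq]; rfl

variable [FiniteDimensional ℂ V]

theorem hasSummand_of_ker_ne_bot {p q : V →ₗ[ℂ] Dual ℂ V} (hp : ∀ x y, p x y = -p y x)
    (hq : ∀ x y, q x y = -q y x) (hker : LinearMap.ker p ≠ ⊥) :
    (∃ m, chainStart p q (LinearMap.ker q) m ≠ ⊥ ∧ HasSummand q p (Lblk m)) ∨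
      ∃ h, HasSummand p q ((Jmat (h + 1) 0, 1) : Pencil (h + 1) (h + 1)) := by
  classical
  by_cases hsing : ∃ m, ∃ v ∈ chainStart p q (LinearMap.ker q) m, v ≠ 0 ∧ p v = 0
  · left
    obtain ⟨v, hv, hv0, hpv⟩ := Nat.find_spec hsing
    have hmin := fun k => Nat.find_min hsing (m := k)
    generalize Nat.find hsing = m at hv hmin
    refine ⟨m, fun h => hv0 (by simpa [h] using hv), ?_⟩
    rcases m with _ | m
    · exact hasSummand_lblk_zero hv0 hv hpv
    · obtain ⟨x, rfl, hx, hxm⟩ := exists_chain_of_mem_chainStart hv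
      obtain ⟨y, hy, hxy⟩ := exists_chain_of_notMem_chainStart_ker hp hq m (x 0)
        fun h => hmin m (by omega) ⟨x 0, h, hv0, hpv⟩
      exact hasSummand_lblk_succ hp hq hpv hx hxm hy hxy
  · right
    have hbdd : ∃ h, ¬ ∃ v ∈ chainStart p q ⊤ h, v ≠ 0 ∧ p v = 0 := by
      refine ⟨finrank ℂ V, ?_⟩
      rintro ⟨v, hv, hv0, hpv⟩
      obtain ⟨x, rfl, hx, -⟩ := exists_chain_of_mem_chainStart hv
      exact hsing (exists_mem_chainStart_ker x hpv hv0 hx)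
    have hspec := Nat.find_spec hbdd
    have hmin := fun k => Nat.find_min hbdd (m := k)
    generalize Nat.find hbdd = m at hspec hmin
    rcases m with _ | h
    · obtain ⟨v, hv, hv0⟩ := (Submodule.ne_bot_iff _).1 hker
      exact absurd ⟨v, trivial, hv0, hv⟩ hspec
    · obtain ⟨v, hv, hv0, hpv⟩ := not_not.1 (hmin h (by omega))
      obtain ⟨x, rfl, hx, -⟩ := exists_chain_of_mem_chainStart hv
      obtain ⟨y, hy0, hy, hxy⟩ := exists_dual_chain hp hq h x hx
        fun hmem => hspec ⟨x 0, hmem, hv0, hpv⟩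
      exact ⟨h, hasSummand_jordan hp hq hpv hx hy0 hy hxy⟩

theorem exists_hasSummand [Nontrivial V] {a b : V →ₗ[ℂ] Dual ℂ V} (ha : ∀ x y, a x y = -a y x)
    (hb : ∀ x y, b x y = -b y x) :
    ∃ B : KBlock, B.valid ∧ 0 < B.cols ∧ HasSummand a b B.toPencil := by
  by_cases hker : LinearMap.ker b = ⊥
  · let b' : V ≃ₗ[ℂ] Dual ℂ V := LinearEquiv.ofInjectiveOfFinrankEq b (LinearMap.ker_eq_bot.1 hker)
      Subspace.dual_finrank_eq.symm
    obtain ⟨μ, hμ⟩ := Module.End.exists_eigenvalue (b'.symm.toLinearMap ∘ₗ a)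
    obtain ⟨v, hv⟩ := hμ.exists_hasEigenvector
    have hav : a v = μ • b v := by
      have : a v = μ • b' v := by simpa using congrArg b' hv.apply_eq_smul
      exact this
    rcases hasSummand_of_ker_ne_bot (p := a - μ • b) (q := b)
      (fun x y => by simp [ha x y, hb x y]; ring) hb
      ((Submodule.ne_bot_iff _).2 ⟨v, by simp [hav], hv.2⟩) with ⟨m, hm, -⟩ | ⟨h, hs⟩
    · rw [hker] at hm
      exact absurd (chainStart_bot hker m) hm
    · exact ⟨.E (h + 1) μ, Nat.succ_pos h, Nat.succ_pos h, hs.jordan_shift⟩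
  · rcases hasSummand_of_ker_ne_bot hb ha hker with ⟨m, -, hs⟩ | ⟨h, hs⟩
    · exact ⟨.L m, trivial, Nat.succ_pos m, hs⟩
    · exact ⟨.Einf (h + 1), Nat.succ_pos h, Nat.succ_pos h, hs.swap⟩

end

/-- The reindexing that splits a direct sum of pencils inside its skew-symmetrization. -/
def blockSumEquiv (r c r' c' : ℕ) :
    (Fin r ⊕ Fin c) ⊕ (Fin r' ⊕ Fin c') ≃ Fin (r + r') ⊕ Fin (c + c') :=
  (Equiv.sumSumSumComm _ _ _ _).trans (Equiv.sumCongr finSumFinEquiv finSumFinEquiv)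

theorem pairSkew_dsum_apply {r c r' c' : ℕ} (X : Pencil r c) (Y : Pencil r' c')
    (i j : (Fin r ⊕ Fin c) ⊕ (Fin r' ⊕ Fin c')) :
    (pairSkew (Pencil.dsum X Y)).1 (blockSumEquiv r c r' c' i) (blockSumEquiv r c r' c' j) =
        fromBlocks (pairSkew X).1 0 0 (pairSkew Y).1 i j ∧
      (pairSkew (Pencil.dsum X Y)).2 (blockSumEquiv r c r' c' i) (blockSumEquiv r c r' c' j) =
        fromBlocks (pairSkew X).2 0 0 (pairSkew Y).2 i j := by
  rcases i with (i | i) | (i | i) <;> rcases j with (j | j) | (j | j) <;>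
    simp [blockSumEquiv, pairSkew, Pencil.dsum]

universe u

theorem exists_basis_pairSkew (n : ℕ) (V : Type u) [AddCommGroup V] [Module ℂ V]
    [FiniteDimensional ℂ V] (a b : V →ₗ[ℂ] Dual ℂ V) (ha : ∀ x y, a x y = -a y x)
    (hb : ∀ x y, b x y = -b y x) (hn : finrank ℂ V = n) :
    ∃ l : List KBlock, (∀ B ∈ l, B.valid) ∧
      ∃ e : Basis (Fin (rowsSum l) ⊕ Fin (colsSum l)) ℂ V, ∀ i j,
        a (e i) (e j) = (pairSkew (pencilOfList l)).1 i j ∧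
        b (e i) (e j) = (pairSkew (pencilOfList l)).2 i j := by
  induction n using Nat.strong_induction_on generalizing V with
  | _ n ih =>
  rcases subsingleton_or_nontrivial V with hV | hV
  · have : IsEmpty (Fin (rowsSum [])) := Fin.isEmpty
    have : IsEmpty (Fin (colsSum [])) := Fin.isEmpty
    exact ⟨[], by simp, Basis.empty V, fun i => isEmptyElim i⟩
  obtain ⟨B, hB, hpos, f, ψ, h1, h2, h3⟩ := exists_hasSummand ha hb
  let W : Submodule ℂ V := ⨅ i, LinearMap.ker (ψ i)
  have hW : ∀ v, v ∈ W ↔ ∀ i, ψ i v = 0 := fun v => by simp [W]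
  have hlt : finrank ℂ W < n := by
    rw [← hn]
    refine Submodule.finrank_lt fun htop => ?_
    have := (hW (f (Sum.inr ⟨0, hpos⟩))).1 (htop ▸ trivial) (Sum.inr ⟨0, hpos⟩)
    simp [h1] at this
  obtain ⟨l, hl, e, he⟩ := ih _ hlt W (W.subtype.dualMap ∘ₗ a ∘ₗ W.subtype)
    (W.subtype.dualMap ∘ₗ b ∘ₗ W.subtype) (fun x y => ha x y) (fun x y => hb x y) rfl
  let g : ((Fin B.rows ⊕ Fin B.cols → ℂ) × W) →ₗ[ℂ] V :=
    (Fintype.linearCombination ℂ f).coprod W.subtype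
  have hψ : ∀ c i, ψ i (Fintype.linearCombination ℂ f c) = c i := fun c i => by
    rw [Fintype.linearCombination_apply, map_sum]
    simp [h1]
  have hg : Function.Bijective g := by
    constructor
    · rw [← LinearMap.ker_eq_bot, LinearMap.ker_eq_bot']
      rintro ⟨c, w⟩ hcw
      have hcw : Fintype.linearCombination ℂ f c + w = 0 := hcw
      have hc : c = 0 := by
        ext i
        have := congrArg (ψ i) hcw
        rwa [map_add, hψ, (hW w).1 w.2 i, map_zero, add_zero] at this
      subst hc
      rw [map_zero, zero_add] at hcw
      simpa using hcw
    · intro v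
      refine ⟨(fun i => ψ i v, ⟨v - Fintype.linearCombination ℂ f (fun i => ψ i v), ?_⟩), ?_⟩
      · rw [hW]
        intro i
        rw [map_sub, hψ, sub_self]
      · simp [g]
  let E : Basis ((Fin B.rows ⊕ Fin B.cols) ⊕ (Fin (rowsSum l) ⊕ Fin (colsSum l))) ℂ V :=
    ((Pi.basisFun ℂ _).prod e).map (LinearEquiv.ofBijective g hg)
  have hEl : ∀ i, E (Sum.inl i) = f i := fun i => by
    simp [E, g, Basis.prod_apply]
  have hEr : ∀ i, E (Sum.inr i) = e i := fun i => by
    simp [E, g, Basis.prod_apply]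
  let σ : (Fin B.rows ⊕ Fin B.cols) ⊕ (Fin (rowsSum l) ⊕ Fin (colsSum l)) ≃
      Fin (rowsSum (B :: l)) ⊕ Fin (colsSum (B :: l)) :=
    blockSumEquiv B.rows B.cols (rowsSum l) (colsSum l)
  have hσ : ∀ i j, _ ∧ _ := pairSkew_dsum_apply B.toPencil (pencilOfList l)
  refine ⟨B :: l, by simpa [hB] using hl, E.reindex σ, fun i j => ?_⟩
  obtain ⟨i, rfl⟩ := σ.surjective i
  obtain ⟨j, rfl⟩ := σ.surjective j
  suffices h : a (E i) (E j) = _ ∧ b (E i) (E j) = _ by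
    simp only [Basis.reindex_apply, Equiv.symm_apply_apply]
    exact ⟨h.1.trans (hσ i j).1.symm, h.2.trans (hσ i j).2.symm⟩
  have hfe : ∀ i j, a (f i) (e j) = 0 ∧ b (f i) (e j) = 0 := fun i j =>
    h2 _ ((hW _).1 (e j).2) i
  have hef : ∀ i j, a (e i) (f j) = 0 ∧ b (e i) (f j) = 0 := fun i j => by
    rw [ha, hb, (hfe j i).1, (hfe j i).2]; simp
  rcases i with i | i <;> rcases j with j | j
  · rw [hEl, hEl]
    exact h3 i j
  · rw [hEl, hEr]
    exact hfe i j
  · rw [hEr, hEl]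
    exact hef i j
  · rw [hEr, hEr]
    exact he i j

theorem pairSkew_transpose {m n : Type*} (P : Matrix m n ℂ × Matrix m n ℂ) :
    (pairSkew P).1ᵀ = -(pairSkew P).1 ∧ (pairSkew P).2ᵀ = -(pairSkew P).2 := by
  simp [pairSkew, fromBlocks_transpose, fromBlocks_neg]

theorem Pencil.IsSkew.exists_pairEquiv_pairSkew {n : ℕ} {Q : Pencil n n} (hQ : Q.IsSkew) :
    ∃ l : List KBlock, (∀ B ∈ l, B.valid) ∧ PairEquiv Q (pairSkew (pencilOfList l)) := by
  have hskew : ∀ M : Matrix (Fin n) (Fin n) ℂ, Mᵀ = -M → ∀ x y : Fin n → ℂ,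
      toLinearMap₂' ℂ M x y = -toLinearMap₂' ℂ M y x := fun M hM x y => by
    rw [toLinearMap₂'_apply', toLinearMap₂'_apply', dotProduct_comm, ← vecMul_transpose,
      ← dotProduct_mulVec, hM, neg_mulVec, dotProduct_neg]
  obtain ⟨l, hl, e, he⟩ := exists_basis_pairSkew n (Fin n → ℂ) (toLinearMap₂' ℂ Q.1)
    (toLinearMap₂' ℂ Q.2) (hskew _ hQ.1) (hskew _ hQ.2) (by simp)
  let R := (Pi.basisFun ℂ (Fin n)).toMatrix e
  let R' := e.toMatrix (Pi.basisFun ℂ (Fin n))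
  have hR : R * R' = 1 := Basis.toMatrix_mul_toMatrix_flip _ _
  have hR' : R' * R = 1 := Basis.toMatrix_mul_toMatrix_flip _ _
  have hform : ∀ (M : Matrix (Fin n) (Fin n) ℂ) i j,
      (Rᵀ * M * R) i j = toLinearMap₂' ℂ M (e i) (e j) := fun M i j => by
    rw [toLinearMap₂'_apply', dotProduct_mulVec]
    rfl
  refine ⟨l, hl, Rᵀ, R'ᵀ, R, R', ?_, ?_, hR, hR', ?_, ?_⟩
  · rw [← transpose_mul, hR', transpose_one]
  · rw [← transpose_mul, hR, transpose_one]
  · ext i j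
    rw [hform, (he i j).1]
  · ext i j
    rw [hform, (he i j).2]

end Decomposition

open scoped Classical

/-- **Lemma 2.6**: a complex matrix pencil is strictly equivalent to some
skew-symmetric matrix pencil if and only if in its Kronecker canonical form
(1) for every `k` and `μ ∈ ℂ` the number of blocks `E_k(μ)` is even,
(2) for every `k` the number of blocks `E_k(∞)` is even, and
(3) for every `k` the number of blocks `L_k` equals the number of blocks
`L_kᵀ`. -/
theorem skew_symmetrizable_iff {n : ℕ} (P : Pencil n n) :
    (∃ Q : Pencil n n, Pencil.IsSkew Q ∧ Pencil.StrictEquiv P Q) ↔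
      ∃ s : Multiset KBlock, RepresentsE P s ∧
        (∀ (k : ℕ) (μ : ℂ), Even (s.count (KBlock.E k μ))) ∧
        (∀ k : ℕ, Even (s.count (KBlock.Einf k))) ∧
        (∀ k : ℕ, s.count (KBlock.L k) = s.count (KBlock.LT k)) := by
  constructor
  · rintro ⟨Q, hQ, hPQ⟩
    obtain ⟨l, hl, hQl⟩ := hQ.exists_pairEquiv_pairSkew
    have h : PairEquiv (pencilOfList (l ++ l.map KBlock.transpose)) P :=
      (pencilOfList_append_transpose_equiv_pairSkew l).trans
        (hQl.symm.trans (strictEquiv_iff_pairEquiv.1 hPQ).symm)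
    have hm : rowsSum (l ++ l.map KBlock.transpose) = n := by simpa using h.card_rows
    have hn : colsSum (l ++ l.map KBlock.transpose) = n := by simpa using h.card_cols
    have hs : ((l ++ l.map KBlock.transpose : List KBlock) : Multiset KBlock) =
        (l : Multiset KBlock) + (l : Multiset KBlock).map KBlock.transpose := rfl
    refine ⟨(l ++ l.map KBlock.transpose : List KBlock), ⟨?_, _, hm, hn, rfl,
      strictEquiv_iff_pairEquiv.2 ((pairEquiv_cast hm hn _).symm.trans h)⟩, ?_⟩
    · intro b hb
      rcases List.mem_append.1 (Multiset.mem_coe.1 hb) with hb | hb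
      · exact hl b hb
      · obtain ⟨c, hc, rfl⟩ := List.mem_map.1 hb
        exact (hl c hc).transpose
    · simp only [hs, Multiset.count_add_map_transpose]
      exact ⟨fun k μ => ⟨_, rfl⟩, fun k => ⟨_, rfl⟩, fun k => add_comm _ _⟩
  · rintro ⟨_, ⟨-, l, hm, hn, rfl, hP⟩, hE, hI, hL⟩
    obtain ⟨t, ht⟩ := Multiset.exists_eq_add_map_transpose _ hE hI hL
    induction t using Quotient.inductionOn with
    | h l' =>
    have hPl : PairEquiv P (pairSkew (pencilOfList l')) :=
      (strictEquiv_iff_pairEquiv.1 hP).symm.trans ((pairEquiv_cast hm hn _).symm.trans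
        ((pencilOfList_perm (Multiset.coe_eq_coe.1 ht)).trans
          (pencilOfList_append_transpose_equiv_pairSkew l')))
    let σ : Fin (rowsSum l') ⊕ Fin (colsSum l') ≃ Fin n :=
      Fintype.equivOfCardEq hPl.card_rows.symm
    let Q : Pencil n n := ((pairSkew (pencilOfList l')).1.submatrix σ.symm σ.symm,
      (pairSkew (pencilOfList l')).2.submatrix σ.symm σ.symm)
    refine ⟨Q, ⟨?_, ?_⟩, strictEquiv_iff_pairEquiv.2 (hPl.trans ?_)⟩
    · exact congrArg (submatrix · σ.symm σ.symm) (pairSkew_transpose (pencilOfList l')).1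
    · exact congrArg (submatrix · σ.symm σ.symm) (pairSkew_transpose (pencilOfList l')).2
    · exact .of_reindex σ.symm σ.symm (by ext; simp [Q]) (by ext; simp [Q])
end
end

section
/- Let P be a skew-symmetric complex matrix pencil. For every eigenvalue μ ∈ ℂ ∪ {∞} and every i ≥ 1, the entry j_i^μ(P) of the Weyr characteristic J_μ(P) is even; that is, the number of blocks E_k(μ) with k ≥ i in the Kronecker canonical form of P is even. -/
/-!
Basic framework: a complex `m × n` matrix pencil `A - λ B` is formalized as the
pair `(A, B)` of matrices.  We define strict equivalence, congruence,
skew-symmetry, orbits, direct sums, and the cover relations for the orbit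
closure hierarchies (in the Euclidean topology).
-/

open Matrix

noncomputable section

/-! Weyr characteristics of a Kronecker canonical form. -/

open scoped Classical

/-- `r_i`: the number of `L`-blocks with index `≥ i`. -/
def rW (s : Multiset KBlock) (i : ℕ) : ℕ :=
  Multiset.card (s.filter fun b => ∃ a, b = KBlock.L a ∧ i ≤ a)

/-- `l_i`: the number of `Lᵀ`-blocks with index `≥ i`. -/
def lW (s : Multiset KBlock) (i : ℕ) : ℕ :=
  Multiset.card (s.filter fun b => ∃ a, b = KBlock.LT a ∧ i ≤ a)

/-- `j_i^μ`: the number of `E`-blocks with eigenvalue `μ ∈ ℂ ∪ {∞}` and index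
`≥ i`. -/
def jW (s : Multiset KBlock) (μ : Option ℂ) (i : ℕ) : ℕ :=
  Multiset.card (s.filter fun b => ∃ a, b = Eb μ a ∧ i ≤ a)

open scoped Kronecker

/-- A skew-symmetric complex matrix has even rank. -/
theorem even_rank_of_transpose_eq_neg {ι : Type*} [Fintype ι] (A : Matrix ι ι ℂ)
    (hA : Aᵀ = -A) : Even A.rank := by
  obtain ⟨W, hW⟩ := (LinearMap.ker A.mulVecLin).exists_isCompl
  have hsum := Submodule.finrank_add_eq_of_isCompl hW
  have hrank := A.mulVecLin.finrank_range_add_finrank_ker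
  have hr : Module.finrank ℂ W = A.rank := by
    rw [Matrix.rank]; omega
  let b := Module.finBasisOfFinrankEq ℂ W hr
  have hswap : ∀ x y : ι → ℂ, x ⬝ᵥ A *ᵥ y = -(y ⬝ᵥ A *ᵥ x) := by
    intro x y
    rw [dotProduct_mulVec, ← mulVec_transpose, hA, neg_mulVec, neg_dotProduct, dotProduct_comm]
  let C : Matrix (Fin A.rank) (Fin A.rank) ℂ :=
    Matrix.of fun i j => (b i : ι → ℂ) ⬝ᵥ A *ᵥ (b j : ι → ℂ)
  have hCskew : Cᵀ = -C := by
    ext i j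
    exact hswap _ _
  have hCdet : C.det ≠ 0 := by
    intro h0
    obtain ⟨v, hv, hCv⟩ := Matrix.exists_mulVec_eq_zero_iff.mpr h0
    apply hv
    let w : W := ∑ j, v j • b j
    have hbw : ∀ i, (b i : ι → ℂ) ⬝ᵥ A *ᵥ (w : ι → ℂ) = 0 := by
      intro i
      have := congrFun hCv i
      simp only [mulVec, dotProduct, C, Matrix.of_apply, Pi.zero_apply] at this
      rw [← this]
      simp only [w, Submodule.coe_sum, Submodule.coe_smul, mulVec_sum, mulVec_smul,
        dotProduct_sum, dotProduct_smul, smul_eq_mul]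
      exact Finset.sum_congr rfl fun j _ => mul_comm _ _
    have hWw : ∀ u : W, (u : ι → ℂ) ⬝ᵥ A *ᵥ (w : ι → ℂ) = 0 := by
      intro u
      have hu : (u : ι → ℂ) = ∑ j, b.repr u j • (b j : ι → ℂ) := by
        conv_lhs => rw [← b.sum_repr u]
        simp only [Submodule.coe_sum, Submodule.coe_smul]
      rw [hu]
      simp [sum_dotProduct, hbw]
    have hAw : A *ᵥ (w : ι → ℂ) = 0 := by
      refine dotProduct_eq_zero _ fun x => ?_
      rw [dotProduct_comm]
      obtain ⟨u, hu, z, hz, rfl⟩ := Submodule.mem_sup.mp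
        (hW.sup_eq_top ▸ Submodule.mem_top : x ∈ LinearMap.ker A.mulVecLin ⊔ W)
      have hu0 : A *ᵥ u = 0 := hu
      rw [add_dotProduct, hWw ⟨z, hz⟩, hswap, hu0]
      simp
    have hw0 : w = 0 := by
      have := Submodule.disjoint_def.mp hW.disjoint w hAw w.2
      exact Subtype.ext this
    exact funext fun j => Fintype.linearIndependent_iff.mp b.linearIndependent v hw0 j
  by_contra hodd
  rw [Nat.not_even_iff_odd] at hodd
  have h := congrArg det hCskew
  rw [det_transpose, det_neg, Fintype.card_fin, hodd.neg_one_pow] at h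
  exact hCdet (self_eq_neg.mp (by simpa using h))

/-- The rank of a block-diagonal matrix is the sum of the ranks of its diagonal blocks. -/
theorem rank_fromBlocks_diagonal {m n p q : Type*} [Fintype m] [Fintype n] [Fintype p]
    [Fintype q] (A : Matrix m n ℂ) (D : Matrix p q ℂ) :
    (fromBlocks A 0 0 D).rank = A.rank + D.rank := by
  let e : LinearMap.ker (fromBlocks A 0 0 D).mulVecLin ≃ₗ[ℂ]
      LinearMap.ker A.mulVecLin × LinearMap.ker D.mulVecLin :=
    { toFun := fun v => (⟨v.1 ∘ Sum.inl, by
          have := v.2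
          simp only [LinearMap.mem_ker, mulVecLin_apply, fromBlocks_mulVec] at this ⊢
          funext i
          simpa using congrFun this (Sum.inl i)⟩, ⟨v.1 ∘ Sum.inr, by
          have := v.2
          simp only [LinearMap.mem_ker, mulVecLin_apply, fromBlocks_mulVec] at this ⊢
          funext i
          simpa using congrFun this (Sum.inr i)⟩)
      invFun := fun v => ⟨Sum.elim v.1.1 v.2.1, by
          have h1 : A *ᵥ v.1.1 = 0 := v.1.2
          have h2 : D *ᵥ v.2.1 = 0 := v.2.2
          simp [fromBlocks_mulVec, h1, h2]⟩
      map_add' := fun _ _ => rfl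
      map_smul' := fun _ _ => rfl
      left_inv := fun v => Subtype.ext (by funext i; cases i <;> rfl)
      right_inv := fun v => rfl }
  have h := e.finrank_eq
  rw [Module.finrank_prod] at h
  have h1 := A.mulVecLin.finrank_range_add_finrank_ker
  have h2 := D.mulVecLin.finrank_range_add_finrank_ker
  have h3 := (fromBlocks A 0 0 D).mulVecLin.finrank_range_add_finrank_ker
  simp only [Module.finrank_fintype_fun_eq_card, Fintype.card_sum] at h1 h2 h3
  simp only [Matrix.rank]
  omega

/-- The block Toeplitz matrix of `X + tY` acting on vectors of polynomials truncated at `t ^ i`. -/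
def toeplitz (i : ℕ) {m n : ℕ} (X Y : Matrix (Fin m) (Fin n) ℂ) :
    Matrix (Fin i × Fin m) (Fin i × Fin n) ℂ :=
  (1 : Matrix (Fin i) (Fin i) ℂ) ⊗ₖ X + Jmat i 0 ⊗ₖ Y

section toeplitz

variable {m n p i : ℕ}

theorem toeplitz_mul (X Y : Matrix (Fin m) (Fin n) ℂ) (Z : Matrix (Fin n) (Fin p) ℂ) :
    toeplitz i X Y * ((1 : Matrix (Fin i) (Fin i) ℂ) ⊗ₖ Z) = toeplitz i (X * Z) (Y * Z) := by
  simp only [toeplitz, Matrix.add_mul, ← mul_kronecker_mul, Matrix.mul_one]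

theorem mul_toeplitz (Z : Matrix (Fin p) (Fin m) ℂ) (X Y : Matrix (Fin m) (Fin n) ℂ) :
    ((1 : Matrix (Fin i) (Fin i) ℂ) ⊗ₖ Z) * toeplitz i X Y = toeplitz i (Z * X) (Z * Y) := by
  simp only [toeplitz, Matrix.mul_add, ← mul_kronecker_mul, Matrix.one_mul]

theorem isUnit_one_kronecker {Z : Matrix (Fin m) (Fin m) ℂ} (hZ : IsUnit Z) :
    IsUnit ((1 : Matrix (Fin i) (Fin i) ℂ) ⊗ₖ Z) := by
  rw [isUnit_iff_isUnit_det] at hZ ⊢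
  rw [det_kronecker]
  simpa using hZ.pow i

theorem rank_toeplitz_mul_mul (S : Matrix (Fin m) (Fin m) ℂ) (R : Matrix (Fin n) (Fin n) ℂ)
    (hS : IsUnit S) (hR : IsUnit R) (X Y : Matrix (Fin m) (Fin n) ℂ) :
    (toeplitz i (S * X * R) (S * Y * R)).rank = (toeplitz i X Y).rank := by
  rw [← toeplitz_mul, ← mul_toeplitz,
    rank_mul_eq_left_of_isUnit_det _ _
      ((isUnit_iff_isUnit_det _).mp (isUnit_one_kronecker hR)),
    rank_mul_eq_right_of_isUnit_det _ _
      ((isUnit_iff_isUnit_det _).mp (isUnit_one_kronecker hS))]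

/-- The block Hankel matrix obtained by reversing the order of the block rows of a block
Toeplitz matrix. -/
def hankel (i : ℕ) (X Y : Matrix (Fin m) (Fin n) ℂ) :
    Matrix (Fin i × Fin m) (Fin i × Fin n) ℂ :=
  (toeplitz i X Y).submatrix (Fin.revPerm.prodCongr (Equiv.refl (Fin m))) (Equiv.refl _)

theorem rank_hankel (X Y : Matrix (Fin m) (Fin n) ℂ) :
    (hankel i X Y).rank = (toeplitz i X Y).rank :=
  rank_submatrix _ _ _

theorem transpose_hankel (X Y : Matrix (Fin m) (Fin n) ℂ) :
    (hankel i X Y)ᵀ = hankel i Xᵀ Yᵀ := by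
  ext ⟨a, p⟩ ⟨b, q⟩
  have h1 : b.rev = a ↔ a.rev = b := by rw [Fin.rev_eq_iff, eq_comm]
  have h2 : Jmat i 0 b.rev a = Jmat i 0 a.rev b := by
    simp only [Jmat, Matrix.of_apply, Fin.val_rev]
    grind
  simp [hankel, toeplitz, Matrix.one_apply, h1, h2]

theorem rank_toeplitz_transpose (X Y : Matrix (Fin m) (Fin n) ℂ) :
    (toeplitz i Xᵀ Yᵀ).rank = (toeplitz i X Y).rank := by
  rw [← rank_hankel, ← transpose_hankel, rank_transpose, rank_hankel]

theorem even_rank_toeplitz {X Y : Matrix (Fin n) (Fin n) ℂ} (hX : Xᵀ = -X) (hY : Yᵀ = -Y) :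
    Even (toeplitz i X Y).rank := by
  rw [← rank_hankel]
  apply even_rank_of_transpose_eq_neg
  rw [transpose_hankel, hX, hY]
  ext ⟨a, p⟩ ⟨b, q⟩
  simp [hankel, toeplitz]
  ring

theorem Jmat_zero_pow_apply_eq_zero (t : ℕ) (a b : Fin i) (h : (b : ℕ) < a + t) :
    (Jmat i 0 ^ t) a b = 0 := by
  induction t generalizing b with
  | zero =>
    rw [pow_zero, Matrix.one_apply_ne]
    exact fun hab => by simp [hab] at h
  | succ t ih =>
    rw [pow_succ, Matrix.mul_apply]
    refine Finset.sum_eq_zero fun c _ => ?_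
    by_cases hc : (c : ℕ) < a + t
    · rw [ih c hc, zero_mul]
    · have : Jmat i 0 c b = 0 := by
        simp only [Jmat, Matrix.of_apply]
        grind
      rw [this, mul_zero]

theorem Jmat_zero_pow_self (i : ℕ) : Jmat i 0 ^ i = 0 := by
  ext a b
  exact Jmat_zero_pow_apply_eq_zero i a b (by omega)

theorem kronecker_pow (A : Matrix (Fin i) (Fin i) ℂ) (B : Matrix (Fin m) (Fin m) ℂ) (t : ℕ) :
    (A ⊗ₖ B) ^ t = (A ^ t) ⊗ₖ (B ^ t) := by
  induction t with
  | zero => simp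
  | succ t ih => rw [pow_succ, ih, pow_succ, pow_succ, mul_kronecker_mul]

theorem isUnit_toeplitz {X : Matrix (Fin m) (Fin m) ℂ} (hX : IsUnit X)
    (Y : Matrix (Fin m) (Fin m) ℂ) : IsUnit (toeplitz i X Y) := by
  have hX' := (isUnit_iff_isUnit_det _).mp hX
  have h : toeplitz i X Y = ((1 : Matrix (Fin i) (Fin i) ℂ) ⊗ₖ X) * toeplitz i 1 (X⁻¹ * Y) := by
    rw [mul_toeplitz, Matrix.mul_one, mul_nonsing_inv_cancel_left _ _ hX']
  rw [h]
  refine (isUnit_one_kronecker hX).mul ?_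
  rw [toeplitz, one_kronecker_one]
  refine IsNilpotent.isUnit_one_add ⟨i, ?_⟩
  rw [kronecker_pow, Jmat_zero_pow_self, zero_kronecker]

/-- If `X` has a right inverse up to a unit, then the block Toeplitz matrix of `X + tY` has full
row rank. -/
theorem rank_toeplitz_of_isUnit_mul {X : Matrix (Fin m) (Fin n) ℂ}
    (Z : Matrix (Fin n) (Fin m) ℂ) (hXZ : IsUnit (X * Z)) (Y : Matrix (Fin m) (Fin n) ℂ) :
    (toeplitz i X Y).rank = i * m := by
  apply le_antisymm
  · simpa using rank_le_card_height (toeplitz i X Y)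
  · have h := rank_mul_le_left (toeplitz i X Y) ((1 : Matrix (Fin i) (Fin i) ℂ) ⊗ₖ Z)
    rw [toeplitz_mul, rank_of_isUnit _ (isUnit_toeplitz hXZ _)] at h
    simpa using h

theorem rank_toeplitz_fromBlocks {p q : ℕ} (X Y : Matrix (Fin m) (Fin n) ℂ)
    (X' Y' : Matrix (Fin p) (Fin q) ℂ) :
    (toeplitz i ((fromBlocks X 0 0 X').submatrix finSumFinEquiv.symm finSumFinEquiv.symm)
      ((fromBlocks Y 0 0 Y').submatrix finSumFinEquiv.symm finSumFinEquiv.symm)).rank =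
      (toeplitz i X Y).rank + (toeplitz i X' Y').rank := by
  rw [← rank_fromBlocks_diagonal, ← rank_submatrix _
    (((Equiv.refl (Fin i)).prodCongr finSumFinEquiv.symm).trans (Equiv.prodSumDistrib _ _ _))
    (((Equiv.refl (Fin i)).prodCongr finSumFinEquiv.symm).trans (Equiv.prodSumDistrib _ _ _))]
  congr 1
  ext ⟨a, r⟩ ⟨b, c⟩
  obtain ⟨r, rfl⟩ := finSumFinEquiv.surjective r
  obtain ⟨c, rfl⟩ := finSumFinEquiv.surjective c
  rcases r with r | r <;> rcases c with c | c <;> simp [toeplitz]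

theorem Jmat_zero_mulVec_apply {k : ℕ} (f : Fin k → ℂ) (p : Fin k) :
    ∑ q, Jmat k 0 p q * f q = if h : (p : ℕ) + 1 < k then f ⟨p + 1, h⟩ else 0 := by
  split_ifs with h
  · rw [Finset.sum_eq_single ⟨p + 1, h⟩]
    · simp [Jmat]
    · intro q _ hq
      have : (q : ℕ) ≠ p + 1 := fun h' => hq (Fin.ext h')
      simp [Jmat, this]
    · simp
  · refine Finset.sum_eq_zero fun q _ => ?_
    have : (q : ℕ) ≠ p + 1 := by omega
    simp [Jmat, this]

theorem toeplitz_Jmat_zero_mulVec_apply {k : ℕ} (v : Fin i × Fin k → ℂ) (a : Fin i)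
    (p : Fin k) :
    (toeplitz i (Jmat k 0) 1 *ᵥ v) (a, p) =
      (if h : (p : ℕ) + 1 < k then v (a, ⟨p + 1, h⟩) else 0) +
        (if h : (a : ℕ) + 1 < i then v (⟨a + 1, h⟩, p) else 0) := by
  rw [← Jmat_zero_mulVec_apply (fun q => v (a, q)) p,
    ← Jmat_zero_mulVec_apply (fun b => v (b, p)) a]
  simp only [mulVec, dotProduct, toeplitz, Matrix.add_apply, kroneckerMap_apply, add_mul,
    Finset.sum_add_distrib, Fintype.sum_prod_type]
  congr 1
  · rw [Finset.sum_eq_single a]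
    · simp
    · intro b _ hb
      simp [Matrix.one_apply_ne hb.symm]
    · simp
  · refine Finset.sum_congr rfl fun b _ => ?_
    rw [Finset.sum_eq_single p]
    · simp
    · intro q _ hq
      simp [Matrix.one_apply_ne hq.symm]
    · simp

theorem finrank_ker_toeplitz_Jmat_zero (i k : ℕ) :
    Module.finrank ℂ (LinearMap.ker (toeplitz i (Jmat k 0) 1).mulVecLin) = min i k := by
  let f : (Fin (min i k) → ℂ) →ₗ[ℂ] (Fin i × Fin k → ℂ) :=
    { toFun := fun w x => if h : (x.1 : ℕ) + x.2 < min i k then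
        (-1) ^ (x.2 : ℕ) * w ⟨x.1 + x.2, h⟩ else 0
      map_add' := fun w w' => by
        funext x
        simp only [Pi.add_apply]
        split_ifs <;> ring
      map_smul' := fun c w => by
        funext x
        simp only [Pi.smul_apply, smul_eq_mul, RingHom.id_apply]
        split_ifs <;> ring }
  have hf : ∀ w x, f w x = if h : (x.1 : ℕ) + x.2 < min i k then
      (-1) ^ (x.2 : ℕ) * w ⟨x.1 + x.2, h⟩ else 0 := fun _ _ => rfl
  have hinj : Function.Injective f := by
    intro w w' h
    funext s
    have hs := s.2
    have := congrFun h (⟨s, by omega⟩, ⟨0, by omega⟩)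
    have hs' : (s : ℕ) < i ∧ (s : ℕ) < k := by omega
    simpa [hf, hs'] using this
  have hrange : LinearMap.range f = LinearMap.ker (toeplitz i (Jmat k 0) 1).mulVecLin := by
    apply le_antisymm
    · rintro _ ⟨w, rfl⟩
      rw [LinearMap.mem_ker, mulVecLin_apply]
      funext ⟨a, p⟩
      rw [toeplitz_Jmat_zero_mulVec_apply]
      simp only [hf, Pi.zero_apply]
      by_cases hs : (a : ℕ) + p + 1 < min i k
      · have h1 : (a : ℕ) + (p + 1) = a + p + 1 := by omega
        have h2 : (a : ℕ) + 1 + p = a + p + 1 := by omega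
        have h3 : (p : ℕ) + 1 < k := by omega
        have h4 : (a : ℕ) + 1 < i := by omega
        simp only [h1, h2, h3, h4, hs, dite_true]
        ring
      · have h1 : ¬ (a : ℕ) + (p + 1) < min i k := by omega
        have h2 : ¬ (a : ℕ) + 1 + p < min i k := by omega
        simp only [h1, h2, dite_false]
        simp
    · intro v hv
      rw [LinearMap.mem_ker, mulVecLin_apply] at hv
      let V : ℕ → ℕ → ℂ := fun a p => if h : a < i ∧ p < k then v (⟨a, h.1⟩, ⟨p, h.2⟩) else 0
      have hVi : ∀ a p, i ≤ a → V a p = 0 := fun a p h => dif_neg (by omega)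
      have hVk : ∀ a p, k ≤ p → V a p = 0 := fun a p h => dif_neg (by omega)
      have hVv : ∀ (a : Fin i) (p : Fin k), V a p = v (a, p) := fun a p => dif_pos ⟨a.2, p.2⟩
      have hV : ∀ a p, a < i → p < k → V a (p + 1) + V (a + 1) p = 0 := by
        intro a p ha hp
        have := congrFun hv (⟨a, ha⟩, ⟨p, hp⟩)
        rw [toeplitz_Jmat_zero_mulVec_apply] at this
        simpa [V, ha, hp] using this
      have hk : ∀ a p, k ≤ a + p → V a p = 0 := by
        intro a
        induction a with
        | zero => exact fun p h => hVk _ _ (by omega)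
        | succ a ih =>
          intro p h
          by_cases hr : a < i ∧ p < k
          · have := hV a p hr.1 hr.2
            rwa [ih (p + 1) (by omega), zero_add] at this
          · by_cases ha : a < i
            · exact hVk _ _ (by omega)
            · exact hVi _ _ (by omega)
      have hi : ∀ p a, i ≤ a + p → V a p = 0 := by
        intro p
        induction p with
        | zero => exact fun a h => hVi _ _ (by omega)
        | succ p ih =>
          intro a h
          by_cases hr : a < i ∧ p < k
          · have := hV a p hr.1 hr.2
            rwa [ih (a + 1) (by omega), add_zero] at this
          · by_cases ha : a < i
            · exact hVk _ _ (by omega)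
            · exact hVi _ _ (by omega)
      have hdiag : ∀ p a, a + p < i → p < k → V a p = (-1) ^ p * V (a + p) 0 := by
        intro p
        induction p with
        | zero => simp
        | succ p ih =>
          intro a ha hp
          have h1 := hV a p (by omega) (by omega)
          rw [ih (a + 1) (by omega) (by omega), show a + 1 + p = a + (p + 1) by omega] at h1
          rw [eq_neg_of_add_eq_zero_left h1]
          ring
      refine ⟨fun s => V s 0, ?_⟩
      funext ⟨a, p⟩
      rw [hf, ← hVv]
      dsimp only
      split_ifs with h
      · exact (hdiag p a (by omega) p.2).symm
      · by_cases h' : i ≤ (a : ℕ) + p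
        · exact (hi p a h').symm
        · exact (hk a p (by omega)).symm
  rw [← hrange, LinearMap.finrank_range_of_inj hinj, Module.finrank_fin_fun]

theorem rank_toeplitz_Jmat_zero_add (i k : ℕ) :
    (toeplitz i (Jmat k 0) 1).rank + min i k = i * k := by
  have h := (toeplitz i (Jmat k 0) 1).mulVecLin.finrank_range_add_finrank_ker
  rw [finrank_ker_toeplitz_Jmat_zero] at h
  simpa [Matrix.rank] using h

end toeplitz

namespace Pencil

/-- The coefficients `(X, Y)` of the expansion of a pencil in a local parameter at
`μ ∈ ℂ ∪ {∞}`, up to sign. -/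
def expandAt {m n : ℕ} : Option ℂ → Pencil m n → Pencil m n
  | some μ, P => (P.1 - μ • P.2, P.2)
  | none, P => (P.2, P.1)

/-- The rank of the `i`-th block Toeplitz matrix of a pencil at `μ ∈ ℂ ∪ {∞}`. -/
def localRank {m n : ℕ} (μ : Option ℂ) (i : ℕ) (P : Pencil m n) : ℕ :=
  (toeplitz i (P.expandAt μ).1 (P.expandAt μ).2).rank

theorem StrictEquiv.localRank_eq {m n : ℕ} {P Q : Pencil m n} (h : StrictEquiv P Q)
    (μ : Option ℂ) (i : ℕ) : P.localRank μ i = Q.localRank μ i := by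
  obtain ⟨S, R, hS, hR, h1, h2⟩ := h
  have hS' : IsUnit S⁻¹ := by simpa using hS
  rw [localRank, ← rank_toeplitz_mul_mul S⁻¹ R hS' hR, localRank]
  cases μ <;> simp [expandAt, ← h1, ← h2, Matrix.mul_sub, Matrix.sub_mul]

theorem IsSkew.even_localRank {n : ℕ} {P : Pencil n n} (h : P.IsSkew) (μ : Option ℂ) (i : ℕ) :
    Even (P.localRank μ i) := by
  cases μ with
  | none => exact even_rank_toeplitz h.2 h.1
  | some μ =>
    refine even_rank_toeplitz ?_ h.2
    change (P.1 - μ • P.2)ᵀ = -(P.1 - μ • P.2)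
    rw [transpose_sub, transpose_smul, h.1, h.2, smul_neg]
    abel

theorem localRank_cast {m n m' n' : ℕ} (hm : m = m') (hn : n = n') (P : Pencil m n)
    (μ : Option ℂ) (i : ℕ) : (P.cast hm hn).localRank μ i = P.localRank μ i := by
  subst hm hn
  rfl

theorem localRank_dsum {m n p q : ℕ} (P : Pencil m n) (Q : Pencil p q) (μ : Option ℂ) (i : ℕ) :
    (P.dsum Q).localRank μ i = P.localRank μ i + Q.localRank μ i := by
  cases μ with
  | none => exact rank_toeplitz_fromBlocks _ _ _ _
  | some μ =>
    simp only [localRank, ← rank_toeplitz_fromBlocks, expandAt, dsum]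
    congr 2
    ext r c
    obtain ⟨r, rfl⟩ := finSumFinEquiv.surjective r
    obtain ⟨c, rfl⟩ := finSumFinEquiv.surjective c
    rcases r with r | r <;> rcases c with c | c <;> simp

end Pencil

theorem Jmat_sub_smul_one (k : ℕ) (ν μ : ℂ) : Jmat k ν - μ • 1 = Jmat k (ν - μ) := by
  ext i j
  simp only [Jmat, Matrix.sub_apply, Matrix.smul_apply, Matrix.of_apply, Matrix.one_apply,
    Fin.ext_iff, smul_eq_mul]
  split_ifs <;> first | omega | simp

theorem isUnit_Jmat (k : ℕ) {ν : ℂ} (hν : ν ≠ 0) : IsUnit (Jmat k ν) := by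
  rw [isUnit_iff_isUnit_det, det_of_isUpperTriangular]
  · simp [Jmat, hν]
  · intro i j hij
    have hij' : (j : ℕ) < i := hij
    have h1 : (j : ℕ) ≠ i := by omega
    have h2 : (j : ℕ) ≠ i + 1 := by omega
    simp [Jmat, h1, h2]

theorem Gmat_mul_submatrix_castSucc (k : ℕ) :
    Gmat k * (1 : Matrix (Fin (k + 1)) (Fin (k + 1)) ℂ).submatrix id Fin.castSucc = 1 := by
  have h : Gmat k * (1 : Matrix (Fin (k + 1)) (Fin (k + 1)) ℂ).submatrix id Fin.castSucc =
      (Gmat k).submatrix id Fin.castSucc := by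
    ext i j
    simp [Matrix.mul_apply, Matrix.one_apply]
  rw [h]
  ext i j
  simp [Gmat, Matrix.one_apply, Fin.ext_iff, eq_comm]

theorem isUnit_Fmat_sub_smul_Gmat_mul (k : ℕ) (μ : ℂ) :
    IsUnit ((Fmat k - μ • Gmat k) *
      (1 : Matrix (Fin (k + 1)) (Fin (k + 1)) ℂ).submatrix id Fin.succ) := by
  have h : (Fmat k - μ • Gmat k) *
      (1 : Matrix (Fin (k + 1)) (Fin (k + 1)) ℂ).submatrix id Fin.succ =
      (Fmat k - μ • Gmat k).submatrix id Fin.succ := by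
    ext i j
    simp [Matrix.mul_apply, Matrix.one_apply]
  rw [h, isUnit_iff_isUnit_det, det_of_isLowerTriangular]
  · simp [Fmat, Gmat]
  · intro i j hij
    have hij' : (i : ℕ) < j := hij
    have h1 : (j : ℕ) ≠ i := by omega
    have h2 : (j : ℕ) + 1 ≠ i := by omega
    simp [Fmat, Gmat, h1, h2]

theorem localRank_Lblk (μ : Option ℂ) (i k : ℕ) : (Lblk k).localRank μ i = i * k := by
  cases μ with
  | none =>
    exact rank_toeplitz_of_isUnit_mul _
      (isUnit_iff_exists_inv.mpr ⟨1, (mul_one _).trans (Gmat_mul_submatrix_castSucc k)⟩) _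
  | some μ => exact rank_toeplitz_of_isUnit_mul _ (isUnit_Fmat_sub_smul_Gmat_mul k μ) _

theorem localRank_LTblk (μ : Option ℂ) (i k : ℕ) : (LTblk k).localRank μ i = i * k := by
  rw [← localRank_Lblk μ]
  cases μ with
  | none => exact rank_toeplitz_transpose _ _
  | some μ =>
    have h := rank_toeplitz_transpose (i := i) (Fmat k - μ • Gmat k) (Gmat k)
    rwa [transpose_sub, transpose_smul] at h

theorem localRank_of_isUnit {k : ℕ} {P : Pencil k k} {μ : Option ℂ}
    (h : IsUnit (P.expandAt μ).1) (i : ℕ) : P.localRank μ i = i * k :=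
  rank_toeplitz_of_isUnit_mul 1 (by rwa [Matrix.mul_one]) _

theorem localRank_Eb_add (μ : Option ℂ) (i k : ℕ) :
    (Eb μ k).toPencil.localRank μ i + min i k = i * k := by
  rw [← rank_toeplitz_Jmat_zero_add]
  cases μ with
  | none => rfl
  | some μ =>
    have h : (toeplitz i (Jmat k μ - μ • 1) 1).rank = (toeplitz i (Jmat k 0) 1).rank := by
      rw [Jmat_sub_smul_one, sub_self]
    exact congrArg (· + min i k) h

theorem idx_Eb (μ : Option ℂ) (k : ℕ) : (Eb μ k).idx = k := by
  cases μ <;> rfl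

theorem localRank_toPencil_of_forall_ne {μ : Option ℂ} {b : KBlock} (hb : ∀ k, b ≠ Eb μ k)
    (i : ℕ) : b.toPencil.localRank μ i = i * b.idx := by
  cases b with
  | L k => exact localRank_Lblk μ i k
  | LT k => exact localRank_LTblk μ i k
  | E k ν =>
    refine localRank_of_isUnit ?_ i
    cases μ with
    | none => exact isUnit_one
    | some μ =>
      have hν : ν - μ ≠ 0 := fun h => hb k (by rw [sub_eq_zero.mp h]; rfl)
      change IsUnit (Jmat k ν - μ • 1)
      exact Jmat_sub_smul_one k ν μ ▸ isUnit_Jmat k hν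
  | Einf k =>
    refine localRank_of_isUnit ?_ i
    cases μ with
    | none => exact absurd rfl (hb k)
    | some μ =>
      change IsUnit (1 - μ • Jmat k 0)
      refine IsNilpotent.isUnit_one_sub ⟨k, ?_⟩
      rw [smul_pow, Jmat_zero_pow_self, smul_zero]

theorem localRank_toPencil_succ (μ : Option ℂ) (i : ℕ) (b : KBlock) :
    b.toPencil.localRank μ (i + 1) + (if ∃ a, b = Eb μ a ∧ i + 1 ≤ a then 1 else 0) =
      b.toPencil.localRank μ i + b.idx := by
  by_cases hb : ∃ k, b = Eb μ k
  · obtain ⟨k, rfl⟩ := hb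
    have h1 := localRank_Eb_add μ i k
    have h2 := localRank_Eb_add μ (i + 1) k
    have h3 : (∃ a, Eb μ k = Eb μ a ∧ i + 1 ≤ a) ↔ i + 1 ≤ k := by
      refine ⟨fun ⟨a, ha, hia⟩ => ?_, fun h => ⟨k, rfl, h⟩⟩
      rwa [← idx_Eb μ k, ha, idx_Eb]
    rw [idx_Eb, if_congr h3 rfl rfl]
    rw [add_mul, one_mul] at h2
    clear h3
    split_ifs <;> omega
  · push Not at hb
    rw [localRank_toPencil_of_forall_ne hb, localRank_toPencil_of_forall_ne hb,
      if_neg fun ⟨a, ha, _⟩ => hb a ha]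
    ring

theorem localRank_pencilOfList_succ (μ : Option ℂ) (i : ℕ) (l : List KBlock) :
    (pencilOfList l).localRank μ (i + 1) + jW l μ (i + 1) =
      (pencilOfList l).localRank μ i + (l.map KBlock.idx).sum := by
  induction l with
  | nil =>
    have h : ∀ j, (pencilOfList []).localRank μ j = 0 := fun j =>
      Nat.le_zero.mp ((rank_le_card_height _).trans
        (by simp : Fintype.card (Fin j × Fin 0) ≤ 0))
    simp [h, jW]
  | cons b t ih =>
    have hj : jW ((b :: t : List KBlock) : Multiset KBlock) μ (i + 1) =
        (if ∃ a, b = Eb μ a ∧ i + 1 ≤ a then 1 else 0) + jW t μ (i + 1) := by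
      rw [← Multiset.cons_coe, jW, Multiset.filter_cons, Multiset.card_add, jW]
      split_ifs <;> simp
    have hb := localRank_toPencil_succ μ i b
    have hd := Pencil.localRank_dsum b.toPencil (pencilOfList t) μ
    rw [hj, List.map_cons, List.sum_cons]
    change (b.toPencil.dsum (pencilOfList t)).localRank μ (i + 1) + _ =
      (b.toPencil.dsum (pencilOfList t)).localRank μ i + _
    rw [hd, hd]
    omega

theorem jW_eq_zero_of_lt {s : Multiset KBlock} {i : ℕ} (hi : ∀ b ∈ s, b.idx < i)
    (μ : Option ℂ) : jW s μ i = 0 := by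
  rw [jW, Multiset.card_eq_zero, Multiset.filter_eq_nil]
  rintro b hb ⟨a, rfl, ha⟩
  have := hi _ hb
  rw [idx_Eb] at this
  omega

/-- **Lemma 2.9**: for a skew-symmetric pencil `P`, every entry `j_i^μ(P)`,
`i ≥ 1`, of the Weyr characteristic of any eigenvalue `μ ∈ ℂ ∪ {∞}` is even;
that is, the number of blocks `E_k(μ)` with `k ≥ i` in the Kronecker canonical
form of `P` is even. -/
theorem jW_even_of_isSkew {n : ℕ} (P : Pencil n n) (hP : Pencil.IsSkew P)
    (s : Multiset KBlock) (hs : RepresentsE P s) (μ : Option ℂ) (i : ℕ) (hi : 1 ≤ i) :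
    Even (jW s μ i) := by
  obtain ⟨-, l, hm, hn, rfl, hl⟩ := hs
  have hrank : ∀ j, Even ((pencilOfList l).localRank μ j) := fun j => by
    rw [← Pencil.localRank_cast hm hn, hl.localRank_eq]
    exact hP.even_localRank μ j
  have hparity : ∀ j, Even (jW l μ (j + 1)) ↔ Even (l.map KBlock.idx).sum := fun j => by
    have h := congrArg Even (localRank_pencilOfList_succ μ j l)
    simpa [Nat.even_add, hrank] using h
  have hzero : jW l μ ((l.map KBlock.idx).sum + 1) = 0 := jW_eq_zero_of_lt
    (fun b hb => Nat.lt_succ_of_le (List.single_le_sum (by simp) _ (List.mem_map_of_mem hb))) μ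
  obtain ⟨j, rfl⟩ := Nat.exists_eq_add_of_le' hi
  rw [hparity, ← hparity (l.map KBlock.idx).sum, hzero]
  exact Even.zero
end
end
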